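/- arXiv:1803.06128 — 2 statements merged into one kernel-verified Lean document; each statement's English description precedes it below -/
import Mathlib

section
/- (Separation lemma) Let k be a field, P = k[[x₁,…,xₙ]] the power series ring with maximal ideal a = (x₁,…,xₙ), and let f₁,…,fₙ ∈ a be such that P/(f₁,…,fₙ) is finite-dimensional over k. Then there exists a k-algebra homomorphism η : P → k̄[[T]], where k̄ is an algebraic closure of k, such that η(a) ⊆ (T), η(f₁) ≠ 0, and η(fᵢ) = 0 for all i > 1. -/
/-!
The base field is first enlarged: the hypothesis says that every variable is nilpotent
modulo `(f₁,…,fₙ)`, and this persists in `P = k̄[[x₁,…,xₙ]]`, so `k` may be taken algebraically closed.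

Since `dim P ≥ n`, Krull's height theorem shows that the maximal ideal is not minimal over
`(f₂,…,fₙ)`. Let `p` be a minimal prime over `(f₂,…,fₙ)` inside it. Any prime containing `p` and `f₁`
is maximal, so `f₁ ∉ p`, and by the principal ideal theorem `A = P/p` is a local domain of dimension
one in which the image `t` of `f₁` is nonzero (`separation_algClosed`).

It remains to map `A` locally to `k[[T]]` without killing `t`. The integral closure of `A` need not be
discussed: take any valuation ring `V` of `Frac A` dominating `A`. Akizuki's length estimate
(`akizuki_ideal`, `akizuki_finite`) shows that `V / tV` is finite-dimensional over `k`. Hence the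
residue field of `V` is `k`, the maximal ideal of `V` is finitely generated and so principal, equal to
`(π)`, and a power of `π` is divisible by `t`. Expanding in powers of `π`
(`exists_powerSeries_hom`) gives a `k`-algebra map `V → k[[T]]` whose kernel does not contain `t`.
-/

open IsLocalRing

/-! ### Finite-dimensional quotients of local algebras -/

/-- In a local `k`-algebra, every element of the maximal ideal is nilpotent modulo an ideal of finite
codimension: a polynomial relation for `x` has the form `x ^ m` times a unit. -/
theorem exists_pow_mem_of_finite_quotient {k R : Type*} [Field k] [CommRing R] [IsLocalRing R]
    [Algebra k R] (I : Ideal R) [Module.Finite k (R ⧸ I)] {x : R} (hx : x ∈ maximalIdeal R) :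
    ∃ m : ℕ, x ^ m ∈ I := by
  obtain ⟨q, hq, hqx⟩ : ∃ q : Polynomial k, q ≠ 0 ∧ Polynomial.aeval x q ∈ I := by
    obtain ⟨q, hq, hqx⟩ := Algebra.IsAlgebraic.isAlgebraic (R := k) (Ideal.Quotient.mk I x)
    refine ⟨q, hq, ?_⟩
    rw [← Ideal.Quotient.eq_zero_iff_mem, ← hqx]
    exact (Polynomial.aeval_algHom_apply (Ideal.Quotient.mkₐ k I) x q).symm
  obtain ⟨r, hr, hrd⟩ := Polynomial.exists_eq_pow_rootMultiplicity_mul_and_not_dvd q hq 0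
  simp only [map_zero, sub_zero] at hr hrd
  rw [Polynomial.X_dvd_iff] at hrd
  have hu : IsUnit (Polynomial.aeval x r) := by
    by_contra hu
    have h1 : Polynomial.aeval x r ∈ maximalIdeal R := hu
    rw [← Polynomial.divX_mul_X_add r] at h1
    simp only [map_add, map_mul, Polynomial.aeval_X, Polynomial.aeval_C] at h1
    rw [Ideal.add_mem_iff_right _ (Ideal.mul_mem_left _ _ hx)] at h1
    exact h1 ((IsUnit.mk0 _ hrd).map (algebraMap k R))
  refine ⟨q.rootMultiplicity 0, ?_⟩
  rw [hr, map_mul, map_pow, Polynomial.aeval_X] at hqx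
  exact (Ideal.mul_unit_mem_iff_mem I hu).mp hqx

/-- A module of finite length over a local `k`-algebra whose residue field is finite over
`k` is finite-dimensional over `k`. -/
theorem finite_of_isFiniteLength {k R M : Type*} [Field k] [CommRing R] [IsLocalRing R]
    [Algebra k R] [Module.Finite k (R ⧸ maximalIdeal R)] [AddCommGroup M] [Module R M]
    [Module k M] [IsScalarTower k R M] (h : IsFiniteLength R M) : Module.Finite k M := by
  rename_i i1 i2 i3
  revert i2 i3
  induction h with
  | of_subsingleton => intros; infer_instance
  | @of_simple_quotient M _ _ N hs hN ih =>
    intro _ _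
    have := ih
    obtain ⟨J, hJ, ⟨e⟩⟩ := isSimpleModule_iff_quot_maximal.mp hs
    obtain rfl := IsLocalRing.eq_maximalIdeal hJ
    have h1 : Module.Finite k (M ⧸ N) :=
      Module.Finite.equiv (e.symm.restrictScalars k)
    have h2 : Module.Finite k (N.restrictScalars k) := this
    have h3 : Module.Finite k (M ⧸ (N.restrictScalars k)) := h1
    exact Module.Finite.of_submodule_quotient (N.restrictScalars k)

theorem finite_quotient_of_mem_minimalPrimes {k R : Type*} [Field k] [CommRing R] [IsLocalRing R]
    [IsNoetherianRing R] [Algebra k R] [Module.Finite k (R ⧸ maximalIdeal R)] (I : Ideal R)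
    (hI : maximalIdeal R ∈ I.minimalPrimes) : Module.Finite k (R ⧸ I) := by
  have := IsLocalRing.quotient_artinian_of_mem_minimalPrimes_of_isLocalRing I hI
  have h1 : IsArtinian R (R ⧸ I) :=
    isArtinian_of_surjective_algebraMap (R := R ⧸ I) Ideal.Quotient.mk_surjective
  exact finite_of_isFiniteLength (R := R)
    (isFiniteLength_iff_isNoetherian_isArtinian.mpr ⟨inferInstance, h1⟩)

/-! ### Akizuki's length estimate -/

/-- For an ideal `I` of a domain `A` whose nonzero ideals all have finite codimension, one has
`dim_k (I / tI) ≤ dim_k (A / tA)`. This is stated as a linear dependence among any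
`dim_k (A / tA) + 1` generators of `I` modulo `tI`. -/
theorem akizuki_ideal {k A : Type*} [Field k] [CommRing A] [IsDomain A] [Algebra k A]
    (hfin : ∀ I : Ideal A, I ≠ ⊥ → Module.Finite k (A ⧸ I)) {t : A} (ht : t ≠ 0)
    (x : Fin (Module.finrank k (A ⧸ Ideal.span {t}) + 1) → A) :
    ∃ c : Fin _ → k, c ≠ 0 ∧ ∑ i, c i • x i ∈ Ideal.span {t} * Ideal.span (Set.range x) := by
  set I := Ideal.span (Set.range x) with hI
  have hxI : ∀ i, x i ∈ I := fun i => Ideal.subset_span ⟨i, rfl⟩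
  by_cases h0 : I = ⊥
  · refine ⟨fun _ => 1, fun h => by simpa using congrFun h 0, ?_⟩
    have : ∀ i, x i = 0 := fun i => by simpa [h0] using hxI i
    simp [this]
  have hTI : Ideal.span {t} * I ≠ ⊥ := mul_ne_zero (by simpa using ht) h0
  have := hfin _ hTI
  have := hfin _ h0
  have := hfin (Ideal.span {t}) (by simpa using ht)
  -- `A/I → A/tI → A/tA` is exact, where `α` is multiplication by `t`, and `ker γ = I/tI`; comparing
  -- dimensions gives `dim (I/tI) ≤ dim (A/tA)`.
  let α : (A ⧸ I) →ₗ[k] (A ⧸ Ideal.span {t} * I) :=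
    (Submodule.mapQ I (Ideal.span {t} * I) (LinearMap.mulLeft A t) (fun y hy =>
      Ideal.mul_mem_mul (Ideal.mem_span_singleton_self t) hy)).restrictScalars k
  let β : (A ⧸ Ideal.span {t} * I) →ₗ[k] (A ⧸ Ideal.span {t}) :=
    (Ideal.Quotient.factorₐ k (Ideal.mul_le_left : Ideal.span {t} * I ≤ Ideal.span {t})).toLinearMap
  let γ : (A ⧸ Ideal.span {t} * I) →ₗ[k] (A ⧸ I) :=
    (Ideal.Quotient.factorₐ k (Ideal.mul_le_right : Ideal.span {t} * I ≤ I)).toLinearMap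
  have hγ : Function.Surjective γ :=
    Ideal.Quotient.factor_surjective (Ideal.mul_le_right : Ideal.span {t} * I ≤ I)
  have hβ : LinearMap.ker β ≤ LinearMap.range α := by
    intro y hy
    obtain ⟨y, rfl⟩ := Ideal.Quotient.mk_surjective y
    have : y ∈ Ideal.span {t} := Ideal.Quotient.eq_zero_iff_mem.mp hy
    obtain ⟨z, rfl⟩ := Ideal.mem_span_singleton'.mp this
    exact ⟨Ideal.Quotient.mk I z, congrArg (Ideal.Quotient.mk _) (mul_comm t z)⟩
  have e1 := β.finrank_range_add_finrank_ker
  have e2 := γ.finrank_range_add_finrank_ker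
  have e3 := Submodule.finrank_mono hβ
  have e4 := LinearMap.finrank_range_le α
  have e5 := (LinearMap.range β).finrank_le
  rw [LinearMap.range_eq_top.mpr hγ, finrank_top] at e2
  have e6 : Module.finrank k (LinearMap.ker γ) <
      Fintype.card (Fin (Module.finrank k (A ⧸ Ideal.span {t}) + 1)) := by
    rw [Fintype.card_fin]; omega
  have hd : ¬ LinearIndependent k (fun i => (⟨Ideal.Quotient.mk _ (x i),
      Ideal.Quotient.eq_zero_iff_mem.mpr (hxI i)⟩ : LinearMap.ker γ)) := fun h =>
    absurd h.fintype_card_le_finrank (by omega)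
  rw [Fintype.not_linearIndependent_iff] at hd
  obtain ⟨c, hc, i, hi⟩ := hd
  refine ⟨c, fun h => hi (congrFun h i), ?_⟩
  rw [← Ideal.Quotient.eq_zero_iff_mem]
  have := congrArg Subtype.val hc
  simp only [Submodule.coe_sum, Submodule.coe_smul, Submodule.coe_zero] at this
  rw [map_sum]
  exact this

/-- The finiteness step of the Krull–Akizuki theorem: if `V` is any ring between the domain `A`
(whose nonzero ideals have finite codimension) and its field of fractions, then `V / tV` is
finite-dimensional. The bound `dim_k (A / tA)` is uniform over the finitely generated
`A`-submodules of `V`, so no finiteness of `V` over `A` is needed. -/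
theorem akizuki_finite {k A V : Type*} [Field k] [CommRing A] [IsDomain A] [Algebra k A]
    [CommRing V] [IsDomain V] [Algebra k V] [Algebra A V] [IsScalarTower k A V]
    (hfin : ∀ I : Ideal A, I ≠ ⊥ → Module.Finite k (A ⧸ I)) {t : A} (ht : t ≠ 0)
    (hinj : Function.Injective (algebraMap A V))
    (hfrac : ∀ v : V, ∃ s : A, s ≠ 0 ∧ ∃ a : A, algebraMap A V s * v = algebraMap A V a) :
    Module.Finite k (V ⧸ Ideal.span {algebraMap A V t}) := by
  set ℓ := Module.finrank k (A ⧸ Ideal.span {t}) with hℓ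
  have key : ∀ v : Fin (ℓ + 1) → V, ∃ c : Fin (ℓ + 1) → k, c ≠ 0 ∧
      ∑ i, c i • v i ∈ Ideal.span {algebraMap A V t} := by
    intro v
    choose s hs a ha using fun i => hfrac (v i)
    -- Clearing denominators moves the generators into `A`.
    let d := ∏ i, s i
    have hd : d ≠ 0 := Finset.prod_ne_zero_iff.mpr fun i _ => hs i
    have : ∀ i, ∃ y : A, algebraMap A V y = algebraMap A V d * v i := by
      intro i
      obtain ⟨e, he⟩ := Finset.dvd_prod_of_mem s (Finset.mem_univ i)
      refine ⟨e * a i, ?_⟩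
      rw [map_mul, ← ha, show d = s i * e from he, map_mul]; ring
    choose y hy using this
    obtain ⟨c, hc, hcy⟩ := akizuki_ideal hfin ht y
    refine ⟨c, hc, ?_⟩
    rw [Ideal.mem_span_singleton_mul] at hcy
    obtain ⟨z, hz, hzy⟩ := hcy
    have hz' : ∃ w : V, algebraMap A V z = algebraMap A V d * w := by
      have : Ideal.span (Set.range y) ≤ (Ideal.span {algebraMap A V d}).comap (algebraMap A V) := by
        rw [Ideal.span_le]
        rintro _ ⟨i, rfl⟩
        exact Ideal.mem_span_singleton.mpr ⟨_, hy i⟩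
      exact Ideal.mem_span_singleton.mp (this hz)
    obtain ⟨w, hw⟩ := hz'
    rw [Ideal.mem_span_singleton]
    refine ⟨w, ?_⟩
    have hd' : algebraMap A V d ≠ 0 := by rwa [Ne, map_eq_zero_iff _ hinj]
    apply mul_left_cancel₀ hd'
    have := congrArg (algebraMap A V) hzy
    rw [map_mul, hw, map_sum] at this
    simp only [Algebra.smul_def, map_mul, hy] at this
    rw [Finset.mul_sum, mul_left_comm, this]
    refine Finset.sum_congr rfl fun i _ => ?_
    rw [Algebra.smul_def, IsScalarTower.algebraMap_apply k A V]; ring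
  have hr : Module.rank k (V ⧸ Ideal.span {algebraMap A V t}) ≤ (ℓ : ℕ) := by
    apply rank_le
    intro S hS
    by_contra! hlt
    obtain ⟨T, hTS, hT⟩ := Finset.exists_subset_card_eq (Nat.succ_le_of_lt hlt)
    let e : Fin (ℓ + 1) ≃ T := (T.equivFinOfCardEq hT).symm
    have hli : LinearIndependent k (fun i => ((e i : T) : V ⧸ Ideal.span {algebraMap A V t})) := by
      have := hS.comp (fun i : Fin (ℓ + 1) => (⟨(e i).1, hTS (e i).2⟩ : S)) (by
        intro i j hij
        exact e.injective (Subtype.ext (congrArg (fun z : S => z.1) hij)))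
      exact this
    choose v hv using fun i => Ideal.Quotient.mk_surjective
      ((e i : T) : V ⧸ Ideal.span {algebraMap A V t})
    obtain ⟨c, hc, hcv⟩ := key v
    apply hc
    funext i
    refine Fintype.linearIndependent_iff.mp hli c ?_ i
    rw [← Ideal.Quotient.eq_zero_iff_mem, map_sum] at hcv
    rw [← hcv]
    refine Finset.sum_congr rfl fun i _ => ?_
    rw [← hv i]; rfl
  exact Module.rank_lt_aleph0_iff.mp (hr.trans_lt (Cardinal.natCast_lt_aleph0))

/-! ### Expansion in powers of a uniformizer -/

/-- Expansion of the elements of a `k`-algebra `V = k ⊕ πV` as power series in `π`; the kernel of the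
expansion lies in `⋂ πⁿ V`. -/
theorem exists_powerSeries_hom {k V : Type*} [Field k] [CommRing V] [IsDomain V] [Algebra k V]
    (ρ : V →ₐ[k] k) {π : V} (hπ0 : π ≠ 0) (hπ : RingHom.ker ρ = Ideal.span {π}) :
    ∃ φ : V →ₐ[k] PowerSeries k,
      (∀ v, PowerSeries.constantCoeff (φ v) = ρ v) ∧
      (∀ v, φ v = 0 → ∀ n : ℕ, v ∈ Ideal.span {π ^ n}) := by
  have hex : ∀ v : V, ∃ d : V, v = algebraMap k V (ρ v) + π * d := by
    intro v
    have : v - algebraMap k V (ρ v) ∈ RingHom.ker ρ := by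
      simp [RingHom.mem_ker]
    rw [hπ, Ideal.mem_span_singleton] at this
    obtain ⟨d, hd⟩ := this
    exact ⟨d, by rw [← hd]; ring⟩
  choose d hd using hex
  -- Here `d v` is the tail of `v`: the coefficient of `Tⁿ` in the expansion will be `ρ (dⁿ v)`.
  have hρπ : ρ π = 0 := by
    have : π ∈ RingHom.ker ρ := hπ ▸ Ideal.mem_span_singleton_self π
    exact this
  have hd1 : ∀ v c w, v = algebraMap k V c + π * w → d v = w := by
    intro v c w h
    have hc : ρ v = c := by rw [h]; simp [hρπ]
    apply mul_left_cancel₀ hπ0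
    have := hd v
    rw [hc] at this
    rw [this] at h
    exact add_left_cancel h
  have hadd : ∀ u v, d (u + v) = d u + d v := fun u v => by
    apply hd1 _ (ρ u + ρ v)
    conv_lhs => rw [hd u, hd v]
    rw [map_add]; ring
  -- The twisted Leibniz rule for `d` makes the expansion multiplicative.
  have hmul : ∀ u v, d (u * v) = ρ u • d v + d u * v := fun u v => by
    apply hd1 _ (ρ u * ρ v)
    rw [Algebra.smul_def, map_mul]
    linear_combination v * hd u + algebraMap k V (ρ u) * hd v
  have hsm : ∀ (c : k) v, d (c • v) = c • d v := fun c v => by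
    apply hd1 _ (c * ρ v)
    rw [Algebra.smul_def, Algebra.smul_def, map_mul]
    linear_combination algebraMap k V c * hd v
  have hone : ∀ c, d (algebraMap k V c) = 0 := fun c => hd1 _ c _ (by simp)
  let D : V →ₗ[k] V := { toFun := d, map_add' := hadd, map_smul' := hsm }
  let L : V →ₗ[k] PowerSeries k :=
    { toFun := fun v => PowerSeries.mk fun n => ρ ((D ^ n) v)
      map_add' := fun u v => by ext n; simp
      map_smul' := fun c v => by ext n; simp }
  have hL0 : ∀ v, PowerSeries.coeff 0 (L v) = ρ v := fun v => by simp [L]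
  have hL1 : ∀ n v, PowerSeries.coeff (n + 1) (L v) = PowerSeries.coeff n (L (d v)) := fun n v => by
    simp only [L, LinearMap.coe_mk, AddHom.coe_mk, PowerSeries.coeff_mk, pow_succ]
    rfl
  have hL : ∀ v, L v = PowerSeries.C (ρ v) + PowerSeries.X * L (d v) := fun v => by
    ext n
    cases n with
    | zero => rw [hL0]; simp
    | succ n => rw [hL1, map_add, PowerSeries.coeff_succ_X_mul]; simp
  have hLalg : ∀ c, L (algebraMap k V c) = PowerSeries.C c := fun c => by
    rw [hL, hone, map_zero]; simp
  have hLmul : ∀ n u v, PowerSeries.coeff n (L (u * v)) = PowerSeries.coeff n (L u * L v) := by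
    intro n
    induction n with
    | zero =>
      intro u v
      rw [hL0, map_mul ρ, PowerSeries.coeff_zero_eq_constantCoeff_apply,
        map_mul PowerSeries.constantCoeff, ← PowerSeries.coeff_zero_eq_constantCoeff_apply,
        ← PowerSeries.coeff_zero_eq_constantCoeff_apply, hL0, hL0]
    | succ n ih =>
      intro u v
      rw [hL1, hmul, map_add, map_smul, map_add, ih, hL u, add_mul, map_add, mul_assoc,
        PowerSeries.coeff_succ_X_mul, PowerSeries.coeff_C_mul, hL1, PowerSeries.coeff_smul,
        smul_eq_mul]
  let φ : V →ₐ[k] PowerSeries k := AlgHom.ofLinearMap L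
    (by rw [← map_one (algebraMap k V), hLalg, map_one])
    (fun u v => by ext n; exact hLmul n u v)
  refine ⟨φ, fun v => ?_, fun v hv n => ?_⟩
  · rw [← PowerSeries.coeff_zero_eq_constantCoeff_apply]; exact hL0 v
  · have hv' : L v = 0 := hv
    clear hv
    induction n generalizing v with
    | zero => simp
    | succ n ih =>
      have h0 : ρ v = 0 := by rw [← hL0, hv', map_zero]
      have h1 : L (d v) = 0 := by ext n; rw [← hL1, hv']; simp
      rw [Ideal.mem_span_singleton]
      obtain ⟨w, hw⟩ := Ideal.mem_span_singleton.mp (ih _ h1)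
      refine ⟨w, ?_⟩
      have := hd v
      rw [h0, hw] at this
      rw [this, map_zero]; ring

/-- Modulo `t`, the maximal ideal of `V` is finitely generated, hence it is principal, with generator
`π` say; since some power of `π` is divisible by `t`, the element `t` survives the `π`-adic
expansion. -/
theorem exists_hom_of_valuationRing {k V : Type*} [Field k] [IsAlgClosed k] [CommRing V] [IsDomain V]
    [ValuationRing V] [Algebra k V] {t : V} (ht0 : t ≠ 0) (ht : t ∈ maximalIdeal V)
    (hfin : Module.Finite k (V ⧸ Ideal.span {t})) :
    ∃ φ : V →ₐ[k] PowerSeries k,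
      (∀ v ∈ maximalIdeal V, PowerSeries.constantCoeff (φ v) = 0) ∧ φ t ≠ 0 := by
  have hle : Ideal.span {t} ≤ maximalIdeal V := by rwa [Ideal.span_singleton_le_iff_mem]
  have hres : Module.Finite k (V ⧸ maximalIdeal V) :=
    Module.Finite.of_surjective (Ideal.Quotient.factorₐ k hle).toLinearMap
      (Ideal.Quotient.factor_surjective hle)
  have hdom : IsDomain (V ⧸ maximalIdeal V) := inferInstance
  have hbij : Function.Bijective (algebraMap k (V ⧸ maximalIdeal V)) :=
    IsAlgClosed.algebraMap_bijective_of_isIntegral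
  let e : k ≃ₐ[k] (V ⧸ maximalIdeal V) := AlgEquiv.ofBijective (Algebra.ofId _ _) hbij
  let ρ : V →ₐ[k] k := e.symm.toAlgHom.comp (Ideal.Quotient.mkₐ k (maximalIdeal V))
  have hρ : ∀ v, ρ v = 0 ↔ v ∈ maximalIdeal V := fun v => by
    change e.symm (Ideal.Quotient.mk _ v) = 0 ↔ _
    rw [map_eq_zero_iff _ e.symm.injective, Ideal.Quotient.eq_zero_iff_mem]
  have hfg : (maximalIdeal V).FG := by
    have h1 : IsNoetherian V (V ⧸ Ideal.span {t}) := isNoetherian_of_tower k inferInstance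
    refine Submodule.fg_of_fg_map_of_fg_inf_ker (Submodule.mkQ (Ideal.span {t}))
      (IsNoetherian.noetherian _) ?_
    rw [Submodule.ker_mkQ, inf_eq_right.mpr hle]
    exact ⟨{t}, by simp⟩
  obtain ⟨π, hπ⟩ := (IsBezout.isPrincipal_of_FG _ hfg).principal
  replace hπ : maximalIdeal V = Ideal.span {π} := hπ
  have hπm : π ∈ maximalIdeal V := hπ ▸ Ideal.mem_span_singleton_self π
  have hπ0 : π ≠ 0 := by
    rintro rfl
    rw [hπ, Ideal.mem_span_singleton, zero_dvd_iff] at ht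
    exact ht0 ht
  obtain ⟨φ, h1, h2⟩ := exists_powerSeries_hom ρ hπ0 (by
    rw [← hπ]; ext v; rw [RingHom.mem_ker]; exact hρ v)
  refine ⟨φ, fun v hv => by rw [h1, (hρ v).mpr hv], fun h => ?_⟩
  obtain ⟨m, hm⟩ := exists_pow_mem_of_finite_quotient (k := k) (Ideal.span {t}) hπm
  obtain ⟨a, ha⟩ := Ideal.mem_span_singleton.mp hm
  obtain ⟨b, hb⟩ := Ideal.mem_span_singleton.mp (h2 t h (m + 1))
  have : π * (b * a) = 1 := by
    apply mul_left_cancel₀ (pow_ne_zero m hπ0)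
    calc _ = (π ^ (m + 1) * b) * a := by ring
      _ = _ := by rw [← hb, ← ha, mul_one]
  exact hπm (IsUnit.of_mul_eq_one _ this)

/-- A local domain over an algebraically closed field `k`, all of whose nonzero ideals have finite
codimension, maps locally to `k[[T]]` without killing a given nonzero `t`: expand in a
valuation ring dominating it. -/
theorem exists_hom_of_local_domain {k A : Type*} [Field k] [IsAlgClosed k] [CommRing A] [IsDomain A]
    [IsLocalRing A] [Algebra k A] (hfin : ∀ I : Ideal A, I ≠ ⊥ → Module.Finite k (A ⧸ I))
    {t : A} (ht0 : t ≠ 0) (ht : t ∈ maximalIdeal A) :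
    ∃ φ : A →ₐ[k] PowerSeries k,
      (∀ v ∈ maximalIdeal A, PowerSeries.constantCoeff (φ v) = 0) ∧ φ t ≠ 0 := by
  let L := FractionRing A
  obtain ⟨V, hV, hloc⟩ := IsLocalRing.exists_factor_valuationRing (algebraMap A L)
  let ι : A →+* V := (algebraMap A L).codRestrict V.toSubring hV
  have hι : Function.Injective ι := fun a b h =>
    IsFractionRing.injective A L (congrArg (fun z : V => (z : L)) h)
  let _ : Algebra A V := ι.toAlgebra
  let _ : Algebra k V := (ι.comp (algebraMap k A)).toAlgebra
  have : IsScalarTower k A V := IsScalarTower.of_algebraMap_eq' rfl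
  have hι' : Function.Injective (algebraMap A V) := hι
  have hfrac : ∀ v : V, ∃ s : A, s ≠ 0 ∧ ∃ a : A, algebraMap A V s * v = algebraMap A V a := by
    intro v
    obtain ⟨a, s, hs, h⟩ := IsFractionRing.div_surjective (A := A) (v : L)
    refine ⟨s, nonZeroDivisors.ne_zero hs, a, Subtype.ext ?_⟩
    change algebraMap A L s * (v : L) = algebraMap A L a
    rw [← h, mul_div_cancel₀]
    exact IsFractionRing.to_map_ne_zero_of_mem_nonZeroDivisors hs
  have hm : ∀ v ∈ maximalIdeal A, algebraMap A V v ∈ maximalIdeal V := fun v hv hu =>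
    hv (hloc.map_nonunit _ hu)
  obtain ⟨φ, h1, h2⟩ := exists_hom_of_valuationRing (k := k)
    (by rwa [Ne, map_eq_zero_iff _ hι'] : algebraMap A V t ≠ 0) (hm t ht)
    (akizuki_finite hfin ht0 hι' hfrac)
  exact ⟨φ.comp (IsScalarTower.toAlgHom k A V), fun v hv => h1 _ (hm v hv), h2⟩

/-! ### The maximal ideal and dimension of a power series ring -/

theorem MvPowerSeries.maximalIdeal_eq_span {k : Type*} [Field k] {n : ℕ} :
    maximalIdeal (MvPowerSeries (Fin n) k) =
      Ideal.span (Set.range (MvPowerSeries.X : Fin n → MvPowerSeries (Fin n) k)) := by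
  classical
  apply le_antisymm
  · -- A series all of whose monomials involve a variable in `s` lies in the span of the variables.
    have key : ∀ (s : Finset (Fin n)) (g : MvPowerSeries (Fin n) k),
        (∀ m : Fin n →₀ ℕ, (∀ i ∈ s, m i = 0) → MvPowerSeries.coeff m g = 0) →
        g ∈ Ideal.span (Set.range (MvPowerSeries.X : Fin n → MvPowerSeries (Fin n) k)) := by
      intro s
      induction s using Finset.induction_on with
      | empty =>
        intro g hg
        have : g = 0 := by ext m; simpa using hg m (by simp)
        simp [this]
      | insert i s hi ih =>
        intro g hg
        let g₁ : MvPowerSeries (Fin n) k := fun m => if m i = 0 then MvPowerSeries.coeff m g else 0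
        have hg₁ : ∀ m, MvPowerSeries.coeff m g₁ = if m i = 0 then MvPowerSeries.coeff m g else 0 :=
          fun m => rfl
        have h1 : g₁ ∈ Ideal.span (Set.range MvPowerSeries.X) := by
          refine ih g₁ fun m hm => ?_
          rw [hg₁]
          split_ifs with h
          · exact hg m fun j hj => by
              rcases Finset.mem_insert.mp hj with rfl | hj
              exacts [h, hm j hj]
          · rfl
        have h2 : MvPowerSeries.X i ∣ g - g₁ := by
          rw [MvPowerSeries.X_dvd_iff]
          intro m hm
          rw [map_sub, hg₁, if_pos hm, sub_self]
        obtain ⟨w, hw⟩ := h2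
        rw [← sub_add_cancel g g₁, hw]
        exact add_mem (Ideal.mul_mem_right _ _ (Ideal.subset_span ⟨i, rfl⟩)) h1
    intro g hg
    refine key Finset.univ g fun m hm => ?_
    have : m = 0 := by ext i; simpa using hm i (Finset.mem_univ i)
    rw [this, MvPowerSeries.coeff_zero_eq_constantCoeff_apply]
    by_contra h
    exact hg (MvPowerSeries.isUnit_iff_constantCoeff.mpr (IsUnit.mk0 _ h))
  · rw [Ideal.span_le]
    rintro _ ⟨i, rfl⟩ h
    simpa using MvPowerSeries.isUnit_iff_constantCoeff.mp h

/-- The lower bound `n ≤ dim k[[x₁,…,xₙ]]`; with Krull's height theorem it forbids the maximal ideal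
from being minimal over `n - 1` elements. -/
theorem MvPowerSeries.le_ringKrullDim {k : Type*} [Field k] (n : ℕ) :
    (n : WithBot ℕ∞) ≤ ringKrullDim (MvPowerSeries (Fin n) k) := by
  induction n with
  | zero => exact ringKrullDim_nonneg_of_nontrivial
  | succ n ih =>
    rw [ringKrullDim_eq_of_ringEquiv (MvPowerSeries.finSuccEquiv k n).toRingEquiv]
    refine le_trans ?_ ringKrullDim_succ_le_ringKrullDim_powerseries
    push_cast
    gcongr

/-! ### Separation -/

/-- The case of an algebraically closed base field, with finite codimension replaced by the condition
that each variable is nilpotent modulo `f`, which is stable under extension of the base field. -/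
theorem separation_algClosed {k : Type*} [Field k] [IsAlgClosed k] {n : ℕ}
    (f : Fin n → MvPowerSeries (Fin n) k) (hf : ∀ i, f i ∈ maximalIdeal (MvPowerSeries (Fin n) k))
    (hX : ∀ i, ∃ m : ℕ, (MvPowerSeries.X i : MvPowerSeries (Fin n) k) ^ m ∈
      Ideal.span (Set.range f)) (i₀ : Fin n) :
    ∃ φ : MvPowerSeries (Fin n) k →ₐ[k] PowerSeries k,
      (∀ v ∈ maximalIdeal (MvPowerSeries (Fin n) k), PowerSeries.constantCoeff (φ v) = 0) ∧
      φ (f i₀) ≠ 0 ∧ ∀ i, i ≠ i₀ → φ (f i) = 0 := by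
  let P := MvPowerSeries (Fin n) k
  let S : Set P := Set.image f {i | i ≠ i₀}
  have hSm : Ideal.span S ≤ maximalIdeal P := by
    rw [Ideal.span_le]; rintro _ ⟨i, -, rfl⟩; exact hf i
  have hnot : maximalIdeal P ∉ (Ideal.span S).minimalPrimes := by
    intro h
    have h1 := Ideal.height_le_card_of_mem_minimalPrimes_span (Set.toFinite S) h
    have h2 : S.ncard ≤ n - 1 := by
      refine (Set.ncard_image_le (Set.toFinite _)).trans ?_
      have : {i | i ≠ i₀} = ((Finset.univ.erase i₀ : Finset (Fin n)) : Set (Fin n)) := by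
        ext; simp
      rw [this, Set.ncard_coe_finset]; simp
    have h3 := MvPowerSeries.le_ringKrullDim (k := k) n
    rw [← IsLocalRing.maximalIdeal_height_eq_ringKrullDim] at h3
    have h4 : (n : ℕ∞) ≤ (maximalIdeal P).height := by exact_mod_cast h3
    have h5 : n ≤ S.ncard := by exact_mod_cast h4.trans h1
    have := i₀.pos
    omega
  obtain ⟨p, hp, hpm⟩ := Ideal.exists_minimalPrimes_le hSm
  have hpp : p.IsPrime := hp.1.1
  have hpne : p ≠ maximalIdeal P := fun h => hnot (h ▸ hp)
  have hfp : ∀ i, i ≠ i₀ → f i ∈ p := fun i hi => hp.1.2 (Ideal.subset_span ⟨i, hi, rfl⟩)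
  have hlarge : ∀ q : Ideal P, q.IsPrime → p ≤ q → f i₀ ∈ q → maximalIdeal P ≤ q := by
    intro q hq hpq h0
    have : Ideal.span (Set.range f) ≤ q := by
      rw [Ideal.span_le]
      rintro _ ⟨i, rfl⟩
      by_cases hi : i = i₀
      · exact hi ▸ h0
      · exact hpq (hfp i hi)
    rw [MvPowerSeries.maximalIdeal_eq_span, Ideal.span_le]
    rintro _ ⟨i, rfl⟩
    obtain ⟨m, hm⟩ := hX i
    exact hq.mem_of_pow_mem m (this hm)
  -- `A = P/p` has dimension one, with `t = f i₀` a parameter.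
  have h0p : f i₀ ∉ p := fun h => hpne (le_antisymm hpm (hlarge p hpp le_rfl h))
  let A := P ⧸ p
  have : IsLocalRing A := IsLocalRing.of_surjective' (Ideal.Quotient.mk p) Ideal.Quotient.mk_surjective
  let t : A := Ideal.Quotient.mk p (f i₀)
  have ht0 : t ≠ 0 := by rwa [Ne, Ideal.Quotient.eq_zero_iff_mem]
  have hcomap : (maximalIdeal A).comap (Ideal.Quotient.mk p) = maximalIdeal P :=
    IsLocalRing.eq_maximalIdeal (Ideal.comap_isMaximal_of_surjective _ Ideal.Quotient.mk_surjective)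
  have hmem : ∀ v ∈ maximalIdeal P, Ideal.Quotient.mk p v ∈ maximalIdeal A := fun v hv => by
    rw [← hcomap] at hv; exact hv
  have htm : t ∈ maximalIdeal A := hmem _ (hf i₀)
  have hlargeA : ∀ q : Ideal A, q.IsPrime → t ∈ q → maximalIdeal A ≤ q := by
    intro q hq htq
    rw [← Ideal.comap_le_comap_iff_of_surjective _ (Ideal.Quotient.mk_surjective (I := p)), hcomap]
    refine hlarge _ (hq.comap _) ?_ htq
    intro x hx
    rw [Ideal.mem_comap, Ideal.Quotient.eq_zero_iff_mem.mpr hx]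
    exact zero_mem _
  have htmin : maximalIdeal A ∈ (Ideal.span {t}).minimalPrimes :=
    ⟨⟨inferInstance, (Ideal.span_singleton_le_iff_mem _).mpr htm⟩, fun q hq _ =>
      hlargeA q hq.1 (hq.2 (Ideal.mem_span_singleton_self t))⟩
  have hht : (maximalIdeal A).height ≤ 1 :=
    Ideal.height_le_one_of_isPrincipal_of_mem_minimalPrimes (Ideal.span {t}) _ htmin
  have hdim : ∀ q : Ideal A, q.IsPrime → q ≠ ⊥ → maximalIdeal A ≤ q := by
    intro q hq hq0
    by_contra hlt
    have hlt : q < maximalIdeal A := lt_of_le_not_ge (IsLocalRing.le_maximalIdeal hq.ne_top) hlt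
    have := (Ideal.height_le_iff.mp hht) q hq hlt
    have h0 : q.height = 0 := Order.lt_one_iff.mp (by simpa using this)
    have h1 := (Ideal.height_eq_zero_iff (I := q)).mp h0
    rw [IsDomain.minimalPrimes_eq_singleton_bot] at h1
    exact hq0 h1
  have hres : Module.Finite k (A ⧸ maximalIdeal A) := by
    have hsurj : Function.Surjective (algebraMap k (A ⧸ maximalIdeal A)) := by
      intro y
      obtain ⟨y, rfl⟩ := Ideal.Quotient.mk_surjective y
      obtain ⟨y, rfl⟩ := Ideal.Quotient.mk_surjective y
      refine ⟨MvPowerSeries.constantCoeff y, ?_⟩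
      change Ideal.Quotient.mk _ (Ideal.Quotient.mk p (algebraMap k P _)) = _
      rw [Ideal.Quotient.mk_eq_mk_iff_sub_mem, ← map_sub]
      refine hmem _ fun hu => ?_
      simpa [P, MvPowerSeries.algebraMap_apply] using MvPowerSeries.isUnit_iff_constantCoeff.mp hu
    exact Module.Finite.of_surjective (Algebra.linearMap k _) hsurj
  have hfin : ∀ I : Ideal A, I ≠ ⊥ → Module.Finite k (A ⧸ I) := by
    intro I hI
    by_cases hIt : I = ⊤
    · have : Subsingleton (A ⧸ I) := Ideal.Quotient.subsingleton_iff.mpr hIt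
      infer_instance
    · refine finite_quotient_of_mem_minimalPrimes I ⟨⟨inferInstance, IsLocalRing.le_maximalIdeal hIt⟩,
        fun q hq _ => hdim q hq.1 fun h => hI (le_bot_iff.mp (h ▸ hq.2))⟩
  obtain ⟨φ, h1, h2⟩ := exists_hom_of_local_domain hfin ht0 htm
  refine ⟨φ.comp (Ideal.Quotient.mkₐ k p), fun v hv => h1 _ (hmem v hv), h2, fun i hi => ?_⟩
  change φ (Ideal.Quotient.mk p (f i)) = 0
  rw [Ideal.Quotient.eq_zero_iff_mem.mpr (hfp i hi), map_zero]

theorem separation_lemma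
    {k : Type*} [Field k] {n : ℕ} (hn : 0 < n)
    (f : Fin n → MvPowerSeries (Fin n) k)
    (a : Ideal (MvPowerSeries (Fin n) k))
    (ha : a = Ideal.span (Set.range (MvPowerSeries.X : Fin n → MvPowerSeries (Fin n) k)))
    (hf : ∀ i, f i ∈ a)
    (hfin : Module.Finite k
      (MvPowerSeries (Fin n) k ⧸ Ideal.span (Set.range f))) :
    ∃ η : MvPowerSeries (Fin n) k →ₐ[k] PowerSeries (AlgebraicClosure k),
      (∀ g ∈ a, η g ∈ Ideal.span {(PowerSeries.X : PowerSeries (AlgebraicClosure k))}) ∧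
      η (f ⟨0, hn⟩) ≠ 0 ∧
      ∀ i : Fin n, i ≠ ⟨0, hn⟩ → η (f i) = 0 := by
  rw [← MvPowerSeries.maximalIdeal_eq_span] at ha
  subst ha
  let β : MvPowerSeries (Fin n) k →ₐ[k] MvPowerSeries (Fin n) (AlgebraicClosure k) :=
    MvPowerSeries.mapAlgHom (Algebra.ofId k (AlgebraicClosure k))
  have hβX : ∀ i, β (MvPowerSeries.X i) = MvPowerSeries.X i := fun i => MvPowerSeries.map_X _ i
  have hβ : ∀ g ∈ maximalIdeal (MvPowerSeries (Fin n) k),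
      β g ∈ maximalIdeal (MvPowerSeries (Fin n) (AlgebraicClosure k)) := by
    intro g hg
    rw [MvPowerSeries.maximalIdeal_eq_span] at hg ⊢
    have := Ideal.mem_map_of_mem β hg
    rw [Ideal.map_span, ← Set.range_comp] at this
    simpa [Function.comp_def, hβX] using this
  obtain ⟨φ, h1, h2, h3⟩ := separation_algClosed (fun i => β (f i)) (fun i => hβ _ (hf i)) (by
    intro i
    have hXm : (MvPowerSeries.X i : MvPowerSeries (Fin n) k) ∈ maximalIdeal _ := by
      rw [MvPowerSeries.maximalIdeal_eq_span]; exact Ideal.subset_span ⟨i, rfl⟩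
    obtain ⟨m, hm⟩ := exists_pow_mem_of_finite_quotient (k := k) (Ideal.span (Set.range f)) hXm
    refine ⟨m, ?_⟩
    have := Ideal.mem_map_of_mem β hm
    rwa [Ideal.map_span, ← Set.range_comp, map_pow, hβX] at this) ⟨0, hn⟩
  refine ⟨(φ.restrictScalars k).comp β, fun g hg => ?_, h2, h3⟩
  rw [Ideal.mem_span_singleton, PowerSeries.X_dvd_iff]
  exact h1 _ (hβ g hg)
end

section
/- Let Q be a finite quiver and Φ, Ψ two potentials of k̂Q whose r-jets agree (i.e., Φ − Ψ ∈ π(m̂^{r+1}) where π is the projection to potentials) for some r > 0. If the Jacobi ideal Ĵ(Q,Φ) contains m̂^{r−1}, then Ĵ(Q,Φ) = Ĵ(Q,Ψ), and hence the Jacobi algebras are equal. -/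
/-!
The quiver is not assumed to be finite, so `m̂^a · m̂^b` may be strictly smaller than `m̂^(a+b)`, and
the ideal generated by the cyclic derivatives may be far from closed.

Write `J_φ` for the ideal generated by the cyclic derivatives of `φ`, before closure. Cyclic
derivatives kill closed commutators and lower the degree by at most one, so
`δ_a = D_a φ - D_a ψ` lies in `m̂^r`. It suffices to prove the Nakayama type statement
`m̂^(r-1) ⊆ J_ψ + m̂^s` for all `s` (`mpow_le_jacSpan_sup`): the closures of `J_φ` and `J_ψ` then
contain all `δ_a`, and agree. The statement is proved by induction on `s`, and all that is needed is
`δ_a ∈ J_ψ + m̂^(s+1)` (`sub_mem_sup_succ`): then `J_φ ⊆ J_ψ + m̂^(s+1)`, and the hypothesis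
`m̂^(r-1) ⊆ J_φ + m̂^(s+1)` gives the next case.

For a finite quiver one has `δ_a ∈ m̂ · m̂^(r-1)`, and multiplying the induction hypothesis by `m̂`
yields the claim. In general, let `a : i ⟶ j`, so that `δ_a` is a series of paths from `j` to `i`,
and consider the ideals of `k` formed by the constant terms of `J_ψ` at `i` and at `j`.

* If they generate the unit ideal, write `1 = α + β` accordingly. Since `α e_i` and `β e_j` lie in
  `J_ψ + m̂`, the decomposition `δ_a = δ_a (α e_i) + (β e_j) δ_a` gains one degree
  (`mem_sup_succ_of_constTerms`).
* Otherwise both vanish in a residue field `F` of `k`. Call an array of size `N` a set of `N²` paths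
  `x_a w y_b` of length `n` from `j` to `i` with a fixed middle part `w` and distinct arrows
  `x_1, …, x_N` and `y_1, …, y_N`. The coefficients of an element of `J_φ` on an array form a matrix
  over `F`. A product of two series without constant terms gives matrices of rank less than `n`,
  and modulo bounded rank only the `F`-combinations of the derivatives with respect to the arrows
  `i ⟶ j` are left (`blockMat_jacSpan_mem`). If there are arrays of arbitrary size, diagonal
  matrices provide elements of `m̂^(r-1)` which are not of this form: when `i ⟶ j` is finite this
  is a dimension count, and when it is infinite one passes to arrays from `i` to `i`, the loops at
  `i` being finite in number by a diagonal argument (`false_of_family`, `not_bad`). So the size of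
  arrays is bounded by some `N`. Then for every path in `δ_a` the first or the last arrow has fewer
  than `N` arrows parallel to it, and `δ_a` is again, modulo `m̂^(s+1)`, a finite sum of products
  from `m̂ · m̂^(r-1)` and `m̂^(r-1) · m̂` (`mem_of_forall_not_bad`).
-/

open scoped Classical

noncomputable section

/-- All splittings `p = u.comp v` of a path `p` in a quiver. -/
def pathSplits {V : Type} [Quiver.{1} V] {i : V} : ∀ {j : V},
    Quiver.Path i j → List (Σ m : V, Quiver.Path i m × Quiver.Path m j)
  | _, Quiver.Path.nil => [⟨i, Quiver.Path.nil, Quiver.Path.nil⟩]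
  | _, Quiver.Path.cons p e =>
      ⟨_, Quiver.Path.cons p e, Quiver.Path.nil⟩ ::
        (pathSplits p).map fun x => ⟨x.1, x.2.1, x.2.2.cons e⟩

/-- An axiomatic presentation of the complete path algebra `k̂Q` of a quiver `Q`
with vertex set `V` over a commutative ring `k`: a `k`-algebra `A` whose
elements are formal series in paths.  `coeff p x` is the coefficient of the path
`p` in `x`, `ofCoeff` builds the series with prescribed coefficients (so `A` is
complete), `pathE p` is the path `p` viewed as an element, `1` is the sum of
the trivial paths, and multiplication is given by convolution over all
splittings of a path. -/
structure CompletePathAlgebra (k V : Type) [CommRing k] [Quiver.{1} V] where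
  A : Type
  [ringA : Ring A]
  [algA : Algebra k A]
  coeff : ∀ {i j : V}, Quiver.Path i j → (A →ₗ[k] k)
  ofCoeff : (∀ i j : V, Quiver.Path i j → k) → A
  pathE : ∀ {i j : V}, Quiver.Path i j → A
  coeff_ofCoeff : ∀ c (i j : V) (p : Quiver.Path i j), coeff p (ofCoeff c) = c i j p
  coeff_ext : ∀ x y : A, (∀ (i j : V) (p : Quiver.Path i j), coeff p x = coeff p y) → x = y
  coeff_pathE : ∀ {i j i' j' : V} (p : Quiver.Path i j) (q : Quiver.Path i' j'),
      coeff q (pathE p) =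
        if (⟨i, j, p⟩ : Σ a b : V, Quiver.Path a b) = ⟨i', j', q⟩ then 1 else 0
  coeff_one : ∀ (i j : V) (p : Quiver.Path i j),
      coeff p (1 : A) = if p.length = 0 then 1 else 0
  coeff_mul : ∀ (x y : A) (i j : V) (p : Quiver.Path i j),
      coeff p (x * y) =
        ((pathSplits p).map fun s => coeff s.2.1 x * coeff s.2.2 y).sum

attribute [instance] CompletePathAlgebra.ringA CompletePathAlgebra.algA

namespace CompletePathAlgebra

variable {k V : Type} [CommRing k] [Quiver.{1} V] (C : CompletePathAlgebra k V)

/-- The `r`-th power `m̂^r` of the arrow ideal: the series all of whose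
coefficients in degrees `< r` vanish. -/
def mpow (r : ℕ) : Submodule k C.A where
  carrier := {x | ∀ ⦃i j : V⦄ (p : Quiver.Path i j), p.length < r → C.coeff p x = 0}
  add_mem' := by
    intro x y hx hy i j p hp
    simp [map_add, hx p hp, hy p hp]
  zero_mem' := by intro i j p hp; simp
  smul_mem' := by
    intro c x hx i j p hp
    simp [map_smul, hx p hp]

/-- The closure of a `k`-subspace of `k̂Q` in the `m̂`-adic topology,
`U^cl = ⋂_r (U + m̂^r)`. -/
def cl (U : Submodule k C.A) : Submodule k C.A := ⨅ r : ℕ, U ⊔ C.mpow r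

/-- The commutator subspace `[A,A]`. -/
def commSub : Submodule k C.A :=
  Submodule.span k {z : C.A | ∃ x y : C.A, z = x * y - y * x}

/-- The closed commutator subspace `[A,A]^cl`. -/
def commCl : Submodule k C.A := C.cl C.commSub

/-- The cyclic derivative `Φ_*(D_a)` with respect to an arrow `a : i ⟶ j`:
the series whose coefficient at a path `q : j → i` is
`Σ_{q = v·u} (coefficient of the cycle `u·a·v` in `φ`)`. -/
def cycDeriv {i j : V} (a : i ⟶ j) (φ : C.A) : C.A :=
  C.ofCoeff fun i' j' q =>
    if h1 : i' = j then
      if h2 : j' = i then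
        ((pathSplits (cast (by rw [h1, h2]) q : Quiver.Path j i)).map
          fun s => C.coeff ((Quiver.Path.cons s.2.2 a).comp s.2.1) φ).sum
      else 0
    else 0

/-- The (not yet closed) two-sided ideal generated by the cyclic derivatives of
`φ`. -/
def jacSpan (φ : C.A) : Submodule k C.A :=
  Submodule.span k
    {z : C.A | ∃ (i j : V) (a : i ⟶ j) (u v : C.A), z = u * C.cycDeriv a φ * v}

/-- The Jacobi ideal `Ĵ(Q,Φ)`: the closure of the two-sided ideal generated by
the cyclic derivatives of `φ`. -/
def jac (φ : C.A) : Submodule k C.A := C.cl (C.jacSpan φ)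

lemma mpow_antitone {r s : ℕ} (h : r ≤ s) : C.mpow s ≤ C.mpow r := by
  intro x hx i j p hp
  exact hx p (lt_of_lt_of_le hp h)

end CompletePathAlgebra

end

namespace JacJet

open Quiver

/-! ### Splittings of paths -/

section Paths

variable {V : Type} [Quiver.{1} V]

lemma pathSplits_comp_cons {i m n j : V} (p : Path i m) (e : m ⟶ n) (v : Path n j) :
    pathSplits ((p.cons e).comp v) =
      ((pathSplits v).map fun s => ⟨s.1, (p.cons e).comp s.2.1, s.2.2⟩) ++
      ((pathSplits p).map fun s => ⟨s.1, s.2.1, (s.2.2.cons e).comp v⟩) := by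
  induction v with
  | nil => simp [pathSplits]
  | cons v f ih =>
    rw [Path.comp_cons, pathSplits, ih]
    simp [pathSplits, Function.comp_def]

lemma pathSplits_toPath_comp {i m j : V} (x : i ⟶ m) (v : Path m j) :
    pathSplits (x.toPath.comp v) =
      ((pathSplits v).map fun s => ⟨s.1, x.toPath.comp s.2.1, s.2.2⟩) ++
      [⟨i, Path.nil, x.toPath.comp v⟩] := by
  have := pathSplits_comp_cons (Path.nil : Path i i) x v
  simpa [pathSplits, Hom.toPath] using this

lemma pathSplits_eq_append {i j : V} (p : Path i j) :
    ∃ L, pathSplits p = L ++ [⟨i, Path.nil, p⟩] ∧ ∀ s ∈ L, 0 < s.2.1.length := by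
  induction p with
  | nil => exact ⟨[], by simp [pathSplits], by simp⟩
  | cons p e ih =>
    obtain ⟨L, hL, h⟩ := ih
    refine ⟨⟨_, p.cons e, Path.nil⟩ :: L.map fun x => ⟨x.1, x.2.1, x.2.2.cons e⟩, ?_, ?_⟩
    · simp [pathSplits, hL]
    · intro s hs
      rw [List.mem_cons, List.mem_map] at hs
      rcases hs with rfl | ⟨t, ht, rfl⟩
      · simp
      · exact h t ht

lemma pathSplits_eq_cons {i j : V} (p : Path i j) :
    ∃ L, pathSplits p = ⟨j, p, Path.nil⟩ :: L ∧ ∀ s ∈ L, 0 < s.2.2.length := by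
  cases p with
  | nil => exact ⟨[], by simp [pathSplits], by simp⟩
  | cons p e =>
    refine ⟨_, rfl, ?_⟩
    intro s hs
    rw [List.mem_map] at hs
    obtain ⟨t, -, rfl⟩ := hs
    simp

lemma length_of_mem_pathSplits {i j : V} (p : Path i j) :
    ∀ s ∈ pathSplits p, s.2.1.length + s.2.2.length = p.length := by
  induction p with
  | nil => simp [pathSplits]
  | cons p e ih =>
    intro s hs
    rw [pathSplits, List.mem_cons, List.mem_map] at hs
    rcases hs with rfl | ⟨t, ht, rfl⟩
    · simp
    · have := ih t ht
      simp only [Path.length_cons]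
      omega

lemma length_pathSplits {i j : V} (p : Path i j) : (pathSplits p).length = p.length + 1 := by
  induction p with
  | nil => simp [pathSplits]
  | cons p e ih => simp [pathSplits, ih]

/-- Coassociativity of the splitting of paths: both sides sum `f` over the ways of cutting `q`
into three consecutive pieces. -/
lemma pathSplits_coassoc {k : Type} [CommRing k] {i j : V} (q : Path i j)
    (f : ∀ {m n : V}, Path i m → Path m n → Path n j → k) :
    ((pathSplits q).map fun s =>
        ((pathSplits s.2.1).map fun t => f t.2.1 t.2.2 s.2.2).sum).sum =
      ((pathSplits q).map fun s =>
        ((pathSplits s.2.2).map fun t => f s.2.1 t.2.1 t.2.2).sum).sum := by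
  induction q with
  | nil => simp [pathSplits]
  | cons q e ih =>
    have := ih (fun a b c => f a b (c.cons e))
    simp only [pathSplits, List.map_cons, List.map_map, Function.comp_def, List.sum_cons,
      List.map_nil, List.sum_nil, add_zero, List.sum_map_add, this]
    ring

end Paths

/-! ### Cyclic derivatives and the ideal they generate -/

section Algebra

variable {k V : Type} [CommRing k] [Quiver.{1} V] (C : CompletePathAlgebra k V)

lemma coeff_cycDeriv {i j : V} (a : i ⟶ j) (φ : C.A) (q : Path j i) :
    C.coeff q (C.cycDeriv a φ) =
      ((pathSplits q).map fun s => C.coeff ((s.2.2.cons a).comp s.2.1) φ).sum := by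
  rw [CompletePathAlgebra.cycDeriv, C.coeff_ofCoeff]
  simp

lemma coeff_cycDeriv_ne {i j i' j' : V} (a : i ⟶ j) (φ : C.A) (q : Path i' j')
    (h : ¬ (i' = j ∧ j' = i)) : C.coeff q (C.cycDeriv a φ) = 0 := by
  rw [CompletePathAlgebra.cycDeriv, C.coeff_ofCoeff]
  split_ifs with h1 h2
  · exact absurd ⟨h1, h2⟩ h
  · rfl
  · rfl

lemma cycDeriv_add {i j : V} (a : i ⟶ j) (x y : C.A) :
    C.cycDeriv a (x + y) = C.cycDeriv a x + C.cycDeriv a y := by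
  apply C.coeff_ext
  intro i' j' q
  by_cases h : i' = j ∧ j' = i
  · obtain ⟨rfl, rfl⟩ := h
    simp [coeff_cycDeriv, List.sum_map_add]
  · simp [coeff_cycDeriv_ne C a _ q h]

lemma cycDeriv_smul {i j : V} (a : i ⟶ j) (c : k) (x : C.A) :
    C.cycDeriv a (c • x) = c • C.cycDeriv a x := by
  apply C.coeff_ext
  intro i' j' q
  by_cases h : i' = j ∧ j' = i
  · obtain ⟨rfl, rfl⟩ := h
    simp [coeff_cycDeriv, List.sum_map_mul_left]
  · simp [coeff_cycDeriv_ne C a _ q h]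

lemma cycDeriv_sub {i j : V} (a : i ⟶ j) (x y : C.A) :
    C.cycDeriv a (x - y) = C.cycDeriv a x - C.cycDeriv a y := by
  rw [sub_eq_add_neg, ← neg_one_smul k y, cycDeriv_add, cycDeriv_smul, neg_one_smul,
    ← sub_eq_add_neg]

lemma cycDeriv_mem_mpow {i j : V} (a : i ⟶ j) {s : ℕ} {x : C.A} (hx : x ∈ C.mpow (s + 1)) :
    C.cycDeriv a x ∈ C.mpow s := by
  intro i' j' q hq
  by_cases h : i' = j ∧ j' = i
  · obtain ⟨rfl, rfl⟩ := h
    rw [coeff_cycDeriv]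
    apply List.sum_eq_zero
    intro t ht
    rw [List.mem_map] at ht
    obtain ⟨s, hs, rfl⟩ := ht
    have := length_of_mem_pathSplits q s hs
    apply hx
    rw [Path.length_comp, Path.length_cons]
    omega
  · exact coeff_cycDeriv_ne C a _ q h

/-- Cyclic derivatives do not distinguish `x * y` from `y * x`: cutting the cycle `u a v` either
before or after the marked arrow `a`, both sides run over the same ways of cutting a path into
three pieces. -/
lemma cycDeriv_mul_comm {i j : V} (a : i ⟶ j) (x y : C.A) :
    C.cycDeriv a (x * y) = C.cycDeriv a (y * x) := by
  apply C.coeff_ext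
  intro i' j' q
  by_cases h : i' = j ∧ j' = i
  · obtain ⟨rfl, rfl⟩ := h
    have h1 := pathSplits_coassoc q
      (fun v₁ v₂ u => C.coeff ((u.cons a).comp v₁) x * C.coeff v₂ y)
    have h2 := pathSplits_coassoc q
      (fun v₁ v₂ u => C.coeff ((u.cons a).comp v₁) y * C.coeff v₂ x)
    simp only [coeff_cycDeriv, C.coeff_mul, pathSplits_comp_cons, List.map_append,
      List.sum_append, List.map_map, Function.comp_def, List.sum_map_add]
    rw [h1, h2, add_comm]
    simp only [mul_comm]
  · simp [coeff_cycDeriv_ne C a _ q h]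

lemma cycDeriv_commCl {i j : V} (a : i ⟶ j) {x : C.A} (hx : x ∈ C.commCl) :
    C.cycDeriv a x = 0 := by
  apply C.coeff_ext
  intro i' j' q
  rw [map_zero]
  have hx' := (Submodule.mem_iInf _).1 hx (q.length + 2)
  obtain ⟨y, hy, z, hz, rfl⟩ := Submodule.mem_sup.1 hx'
  have hy0 : C.cycDeriv a y = 0 := by
    refine Submodule.span_induction ?_ ?_ ?_ ?_ hy
    · rintro _ ⟨u, v, rfl⟩
      rw [cycDeriv_sub, cycDeriv_mul_comm, sub_self]
    · have := cycDeriv_smul C a 0 0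
      simpa using this
    · intro u v _ _ hu hv
      rw [cycDeriv_add, hu, hv, add_zero]
    · intro c u _ hu
      rw [cycDeriv_smul, hu, smul_zero]
  rw [cycDeriv_add, hy0, zero_add]
  exact cycDeriv_mem_mpow C a hz q (by omega)

lemma cycDeriv_sub_mem {φ ψ : C.A} {r : ℕ} (hjet : φ - ψ ∈ C.commCl ⊔ C.mpow (r + 1))
    {i j : V} (a : i ⟶ j) : C.cycDeriv a φ - C.cycDeriv a ψ ∈ C.mpow r := by
  obtain ⟨y, hy, z, hz, h⟩ := Submodule.mem_sup.1 hjet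
  rw [← cycDeriv_sub, ← h, cycDeriv_add, cycDeriv_commCl C a hy, zero_add]
  exact cycDeriv_mem_mpow C a hz

lemma mul_mem_mpow {a b : ℕ} {x y : C.A} (hx : x ∈ C.mpow a) (hy : y ∈ C.mpow b) :
    x * y ∈ C.mpow (a + b) := by
  intro i j p hp
  rw [C.coeff_mul]
  apply List.sum_eq_zero
  intro t ht
  rw [List.mem_map] at ht
  obtain ⟨s, hs, rfl⟩ := ht
  have := length_of_mem_pathSplits p s hs
  rcases lt_or_ge s.2.1.length a with h | h
  · simp [hx s.2.1 h]
  · simp [hy s.2.2 (by omega)]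

lemma mem_mpow_zero (x : C.A) : x ∈ C.mpow 0 := by
  intro i j p hp
  omega

lemma jacSpan_mul_left (φ : C.A) (w : C.A) {x : C.A} (hx : x ∈ C.jacSpan φ) :
    w * x ∈ C.jacSpan φ := by
  refine Submodule.span_induction ?_ ?_ ?_ ?_ hx
  · rintro _ ⟨i, j, a, u, v, rfl⟩
    exact Submodule.subset_span ⟨i, j, a, w * u, v, by simp only [mul_assoc]⟩
  · simp
  · intro y z _ _ hy hz
    rw [mul_add]
    exact add_mem hy hz
  · intro c y _ hy
    rw [mul_smul_comm]
    exact Submodule.smul_mem _ _ hy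

lemma jacSpan_mul_right (φ : C.A) (w : C.A) {x : C.A} (hx : x ∈ C.jacSpan φ) :
    x * w ∈ C.jacSpan φ := by
  refine Submodule.span_induction ?_ ?_ ?_ ?_ hx
  · rintro _ ⟨i, j, a, u, v, rfl⟩
    exact Submodule.subset_span ⟨i, j, a, u, v * w, by simp only [mul_assoc]⟩
  · simp
  · intro y z _ _ hy hz
    rw [add_mul]
    exact add_mem hy hz
  · intro c y _ hy
    rw [smul_mul_assoc]
    exact Submodule.smul_mem _ _ hy

lemma mul_mem_sup_left (φ : C.A) {a s : ℕ} {w x : C.A} (hw : w ∈ C.mpow a)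
    (hx : x ∈ C.jacSpan φ ⊔ C.mpow s) : w * x ∈ C.jacSpan φ ⊔ C.mpow (a + s) := by
  obtain ⟨y, hy, z, hz, rfl⟩ := Submodule.mem_sup.1 hx
  rw [mul_add]
  exact Submodule.add_mem_sup (jacSpan_mul_left C φ w hy) (mul_mem_mpow C hw hz)

lemma mul_mem_sup_right (φ : C.A) {a s : ℕ} {w x : C.A} (hw : w ∈ C.mpow a)
    (hx : x ∈ C.jacSpan φ ⊔ C.mpow s) : x * w ∈ C.jacSpan φ ⊔ C.mpow (s + a) := by
  obtain ⟨y, hy, z, hz, rfl⟩ := Submodule.mem_sup.1 hx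
  rw [add_mul]
  exact Submodule.add_mem_sup (jacSpan_mul_right C φ w hy) (mul_mem_mpow C hz hw)

/-- Changing the generators of the ideal by elements of `J_ψ + m̂^s` does not lead out of
`J_ψ + m̂^s`. -/
lemma jacSpan_le_of_sub_mem {φ ψ : C.A} {s : ℕ}
    (h : ∀ {i j : V} (a : i ⟶ j),
      C.cycDeriv a φ - C.cycDeriv a ψ ∈ C.jacSpan ψ ⊔ C.mpow s) :
    C.jacSpan φ ≤ C.jacSpan ψ ⊔ C.mpow s := by
  refine Submodule.span_le.2 ?_
  rintro _ ⟨i, j, a, u, v, rfl⟩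
  have e : u * C.cycDeriv a φ * v =
      u * C.cycDeriv a ψ * v + u * (C.cycDeriv a φ - C.cycDeriv a ψ) * v := by
    noncomm_ring
  rw [e]
  refine add_mem (Submodule.mem_sup_left (Submodule.subset_span ⟨i, j, a, u, v, rfl⟩)) ?_
  have := mul_mem_sup_right C ψ (mem_mpow_zero C v)
    (mul_mem_sup_left C ψ (mem_mpow_zero C u) (h a))
  simpa using this

end Algebra

/-! ### Families of matrices of bounded rank -/

section Rank

open Matrix

lemma rank_add_le' {F : Type} [Field F] {n : ℕ} (M N : Matrix (Fin n) (Fin n) F) :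
    (M + N).rank ≤ M.rank + N.rank := by
  rw [Matrix.rank, Matrix.rank, Matrix.rank, mulVecLin_add]
  refine le_trans (Submodule.finrank_mono ?_) (Submodule.finrank_add_le_finrank_add_finrank _ _)
  rintro _ ⟨v, rfl⟩
  exact Submodule.add_mem_sup ⟨v, rfl⟩ ⟨v, rfl⟩

/-- Families of square matrices `M e` of size `sz e` whose ranks are bounded uniformly in `e`. -/
def bddRank (F : Type) [Field F] {ι : Type*} (sz : ι → ℕ) :
    Submodule F (∀ e, Matrix (Fin (sz e)) (Fin (sz e)) F) where
  carrier := {M | ∃ c : ℕ, ∀ e, (M e).rank ≤ c}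
  add_mem' := by
    rintro M N ⟨c, hc⟩ ⟨d, hd⟩
    exact ⟨c + d, fun e => (rank_add_le' _ _).trans (add_le_add (hc e) (hd e))⟩
  zero_mem' := ⟨0, fun e => by simp⟩
  smul_mem' := by
    rintro a M ⟨c, hc⟩
    refine ⟨c, fun e => le_trans ?_ (hc e)⟩
    have : (a • M) e = (a • (1 : Matrix (Fin (sz e)) (Fin (sz e)) F)) * M e := by simp
    rw [this]
    exact rank_mul_le_right _ _

variable {F : Type} [Field F]

lemma rank_list_sum_le {α : Type*} {n : ℕ} (l : List α) (f g : α → Fin n → F) :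
    (Matrix.of fun a b => (l.map fun s => f s a * g s b).sum).rank ≤ l.length := by
  induction l with
  | nil =>
    have : (Matrix.of fun a b : Fin n => (([] : List α).map fun s => f s a * g s b).sum) = 0 := by
      ext; simp
    rw [this]; simp
  | cons s l ih =>
    have : (Matrix.of fun a b => ((s :: l).map fun s => f s a * g s b).sum) =
        vecMulVec (f s) (g s) + Matrix.of fun a b => (l.map fun s => f s a * g s b).sum := by
      ext; simp [vecMulVec_apply]
    rw [this, List.length_cons, add_comm l.length]
    exact (rank_add_le' _ _).trans (add_le_add (rank_vecMulVec_le _ _) ih)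

/-- The family which is the identity matrix at the indices in `S` and zero elsewhere. -/
noncomputable def idOn (F : Type) [Field F] (sz : ℕ → ℕ) (S : Set ℕ) :
    ∀ e, Matrix (Fin (sz e)) (Fin (sz e)) F := fun e => if e ∈ S then 1 else 0

/-- Modulo families of bounded rank, finitely many families do not span: the identity families
supported on the infinitely many disjoint infinite sets `{e | (Nat.unpair e).1 = t}` are linearly
independent there, since a nontrivial combination has full rank on one of these sets. -/
lemma exists_idOn_notMem (sz : ℕ → ℕ) (hsz : ∀ e, e ≤ sz e)
    {D : Set (∀ e, Matrix (Fin (sz e)) (Fin (sz e)) F)} (hD : D.Finite) :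
    ∃ S : Set ℕ, idOn F sz S ∉ bddRank F sz ⊔ Submodule.span F D := by
  by_contra! hcon
  let S : ℕ → Set ℕ := fun t => {e | (Nat.unpair e).1 = t}
  let v : ℕ → (∀ e, Matrix (Fin (sz e)) (Fin (sz e)) F) ⧸ bddRank F sz :=
    fun t => (bddRank F sz).mkQ (idOn F sz (S t))
  have hli : LinearIndependent F v := by
    rw [linearIndependent_iff']
    intro s g hg t ht
    by_contra hne
    have hmem : ∑ i ∈ s, g i • idOn F sz (S i) ∈ bddRank F sz := by
      rw [← Submodule.ker_mkQ (bddRank F sz), LinearMap.mem_ker, map_sum]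
      simpa [v] using hg
    obtain ⟨c, hc⟩ := hmem
    have he := hc (Nat.pair t (c + 1))
    have : (∑ i ∈ s, g i • idOn F sz (S i)) (Nat.pair t (c + 1)) = g t • 1 := by
      rw [Finset.sum_apply, Finset.sum_eq_single t]
      · simp [idOn, S]
      · intro i _ hi
        simp [idOn, S, hi.symm]
      · exact fun h => absurd ht h
    have hu : IsUnit (g t • (1 : Matrix (Fin (sz (Nat.pair t (c + 1))))
        (Fin (sz (Nat.pair t (c + 1)))) F)) :=
      (isUnit_one).smul (Units.mk0 _ hne)
    rw [this, rank_of_isUnit _ hu, Fintype.card_fin] at he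
    have := hsz (Nat.pair t (c + 1))
    have := Nat.right_le_pair t (c + 1)
    omega
  have hfin : ((bddRank F sz).mkQ '' D).Finite := hD.image _
  have hle : Set.range v ≤ Submodule.span F ((bddRank F sz).mkQ '' D) := by
    rintro _ ⟨t, rfl⟩
    obtain ⟨y, hy, z, hz, h⟩ := Submodule.mem_sup.1 (hcon (S t))
    have : v t = (bddRank F sz).mkQ z := by
      simp only [v, ← h, map_add]
      rw [show (bddRank F sz).mkQ y = 0 by simpa using hy, zero_add]
    rw [this, Submodule.span_image]
    exact Submodule.mem_map_of_mem hz
  have := hfin.to_subtype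
  have := LinearIndependent.finite_of_le_span_finite v hli _ hle
  exact not_finite ℕ

end Rank

/-! ### Arrays of paths -/

section Blocks

variable {V : Type} [Quiver.{1} V]

/-- An `N × N` array of paths `x a · w · y b` of length `n` from `j` to `i`, which share the middle
part `w` and have `N` distinct first arrows `x a` and `N` distinct last arrows `y b`. -/
structure Block (j i : V) (n N : ℕ) where
  /-- the common target of the first arrows -/
  src : V
  /-- the common source of the last arrows -/
  tgt : V
  /-- the common middle part -/
  mid : Path src tgt
  length_mid : mid.length + 2 = n
  x : Fin N ↪ (j ⟶ src)
  y : Fin N ↪ (tgt ⟶ i)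

namespace Block

variable {j i : V} {n N : ℕ}

/-- The path `x a · w · y b` of the array. -/
def path (B : Block j i n N) (a b : Fin N) : Path j i :=
  ((B.x a).toPath.comp B.mid).cons (B.y b)

/-- The first arrow of the paths in row `a`, together with its target. -/
def first (B : Block j i n N) (a : Fin N) : Σ m : V, (j ⟶ m) := ⟨B.src, B.x a⟩

lemma first_injective (B : Block j i n N) : Function.Injective B.first := by
  intro a b h
  exact B.x.injective (by simpa [first] using h)

lemma length_path (B : Block j i n N) (a b : Fin N) : (B.path a b).length = n := by
  have := B.length_mid
  simp only [path, Path.length_cons, Path.length_comp, Path.length_toPath]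
  omega

/-- The subarray on the rows and columns selected by `f`. -/
def restrict (B : Block j i n N) {M : ℕ} (f : Fin M ↪ Fin N) : Block j i n M where
  src := B.src
  tgt := B.tgt
  mid := B.mid
  length_mid := B.length_mid
  x := f.trans B.x
  y := f.trans B.y

end Block

lemma first_eq_of_comp_eq {j m m' l : V} (x : j ⟶ m) (w : Path m l) (x' : j ⟶ m')
    (w' : Path m' l) (h : x.toPath.comp w = x'.toPath.comp w') :
    (⟨m, x⟩ : Σ m : V, (j ⟶ m)) = ⟨m', x'⟩ := by
  induction w with
  | nil =>
    cases w' with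
    | nil => simpa [Hom.toPath] using h
    | cons w' f =>
      have := congrArg Path.length h
      simp at this
  | cons w f ih =>
    cases w' with
    | nil =>
      have := congrArg Path.length h
      simp at this
    | cons w' f' =>
      rw [Path.comp_cons, Path.comp_cons] at h
      obtain ⟨rfl, h, -⟩ := Path.cons.inj h
      exact ih w' (eq_of_heq h)

lemma Block.eq_of_path_eq {j i : V} {n N N' : ℕ} (B : Block j i n N) (B' : Block j i n N')
    {a b : Fin N} {a' b' : Fin N'} (h : B.path a b = B'.path a' b') :
    B.first a = B'.first a' ∧ (⟨B.tgt, B.y b⟩ : Σ m : V, (m ⟶ i)) = ⟨B'.tgt, B'.y b'⟩ := by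
  obtain ⟨s, t, w, hw, x, y⟩ := B
  obtain ⟨s', t', w', hw', x', y'⟩ := B'
  simp only [path] at h
  obtain ⟨h1, h2, h3⟩ := Path.cons.inj h
  obtain rfl : t = t' := h1
  refine ⟨first_eq_of_comp_eq _ _ _ _ (eq_of_heq h2), ?_⟩
  simpa using h3

/-- Arbitrarily large arrays of paths of length `n` from `j` to `i` exist. -/
def Bad (j i : V) (n : ℕ) : Prop := ∀ N, Nonempty (Block j i n N)

/-- If arbitrarily large arrays exist, then there are arbitrarily large arrays no two of which
share a first arrow. -/
lemma Bad.exists_seq {j i : V} {n : ℕ} (h : Bad j i n) :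
    ∃ (sz : ℕ → ℕ) (B : ∀ e, Block j i n (sz e)), (∀ e, e ≤ sz e) ∧
      Function.Injective fun q : Σ e, Fin (sz e) => (B q.1).first q.2 := by
  obtain ⟨f, -, hf⟩ := exists_seq_of_forall_finset_exists
    (α := Σ N, Block j i n N) (fun _ => True)
    (fun p q => p.1 < q.1 ∧ ∀ a b, p.2.first a ≠ q.2.first b) (by
      intro s _
      let U : Finset (Σ m : V, (j ⟶ m)) := s.biUnion fun p => Finset.univ.image p.2.first
      let N₀ := s.sup fun p => p.1
      obtain ⟨B⟩ := h (N₀ + 1 + U.card)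
      let R : Finset (Fin (N₀ + 1 + U.card)) := Finset.univ.filter fun a => B.first a ∉ U
      have hR : N₀ + 1 ≤ R.card := by
        have h1 := Finset.card_filter_add_card_filter_not
          (s := (Finset.univ : Finset (Fin (N₀ + 1 + U.card)))) (fun a => B.first a ∉ U)
        have h2 : (Finset.univ.filter fun a => ¬ B.first a ∉ U).card ≤ U.card := by
          refine Finset.card_le_card_of_injOn B.first ?_ (B.first_injective.injOn)
          intro a ha
          simpa using ha
        rw [Finset.card_univ, Fintype.card_fin] at h1
        change N₀ + 1 ≤ (Finset.univ.filter fun a => B.first a ∉ U).card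
        omega
      let g := R.orderEmbOfCardLe hR
      refine ⟨⟨N₀ + 1, B.restrict g.toEmbedding⟩, trivial, fun p hp => ⟨?_, ?_⟩⟩
      · exact Nat.lt_succ_of_le (Finset.le_sup (f := fun p : Σ N, Block j i n N => p.1) hp)
      · intro a b hab
        have hb : g b ∈ R := R.orderEmbOfCardLe_mem hR b
        refine (Finset.mem_filter.1 hb).2 ?_
        change (B.restrict g.toEmbedding).first b ∈ U
        rw [← hab]
        exact Finset.mem_biUnion.2 ⟨p, hp, Finset.mem_image_of_mem _ (Finset.mem_univ a)⟩)
  have hmono : StrictMono fun e => (f e).1 := fun a b hab => (hf a b hab).1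
  refine ⟨fun e => (f e).1, fun e => (f e).2, fun e => hmono.le_apply, ?_⟩
  rintro ⟨e, a⟩ ⟨e', a'⟩ hq
  rcases lt_trichotomy e e' with hlt | rfl | hlt
  · exact absurd hq ((hf _ _ hlt).2 a a')
  · have h' : a = a' := (f e).2.first_injective hq
    subst h'
    rfl
  · exact absurd hq.symm ((hf _ _ hlt).2 a' a)

end Blocks

/-! ### Bounding the size of arrays -/

section Core

variable {k V : Type} [CommRing k] [Quiver.{1} V] (C : CompletePathAlgebra k V)
variable {F : Type} [Field F] (ρ : k →+* F)

/-- The matrices, over the field `F`, of the coefficients of `z` along a family of arrays. -/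
def blockMat {j i : V} {n : ℕ} {ι : Type*} {sz : ι → ℕ} (B : ∀ e, Block j i n (sz e)) (z : C.A) :
    ∀ e, Matrix (Fin (sz e)) (Fin (sz e)) F :=
  fun e => Matrix.of fun a b => ρ (C.coeff ((B e).path a b) z)

variable {j i : V} {n : ℕ} {ι : Type*} {sz : ι → ℕ} (B : ∀ e, Block j i n (sz e))

lemma blockMat_add (y z : C.A) :
    blockMat C ρ B (y + z) = blockMat C ρ B y + blockMat C ρ B z := by
  ext; simp [blockMat]

lemma blockMat_smul (c : k) (z : C.A) :
    blockMat C ρ B (c • z) = ρ c • blockMat C ρ B z := by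
  ext; simp [blockMat]

/-- A product of two factors without constant terms at the end points has bounded rank, because
every cut of the path `x a · w · y b` inside separates `x a` from `y b`. -/
lemma blockMat_mul_mem {y z : C.A} (hy : ρ (C.coeff (Path.nil : Path j j) y) = 0)
    (hz : ρ (C.coeff (Path.nil : Path i i) z) = 0) :
    blockMat C ρ B (y * z) ∈ bddRank F sz := by
  refine ⟨n, fun e => ?_⟩
  have : blockMat C ρ B (y * z) e = Matrix.of fun a b =>
      ((pathSplits (B e).mid).map fun s => ρ (C.coeff (((B e).x a).toPath.comp s.2.1) y) *
        ρ (C.coeff (s.2.2.cons ((B e).y b)) z)).sum := by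
    ext a b
    simp only [blockMat, Matrix.of_apply, C.coeff_mul, Block.path, pathSplits,
      pathSplits_toPath_comp, List.map_cons, List.map_append, List.map_map, List.sum_cons,
      List.sum_append, map_add, map_mul, hy, hz, List.map_nil, List.sum_nil, mul_zero,
      zero_mul, add_zero, zero_add, map_list_sum, Function.comp_def]
  have hlen := (B e).length_mid
  have hle := rank_list_sum_le (F := F) (n := sz e) (pathSplits (B e).mid)
    (fun s a => ρ (C.coeff (((B e).x a).toPath.comp s.2.1) y))
    (fun s b => ρ (C.coeff (s.2.2.cons ((B e).y b)) z))
  rw [← this, length_pathSplits] at hle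
  omega

lemma coeff_nil_mul {l : V} (y z : C.A) : C.coeff (Path.nil : Path l l) (y * z) =
    C.coeff (Path.nil : Path l l) y * C.coeff (Path.nil : Path l l) z := by
  simp [C.coeff_mul, pathSplits]

/-- Suppose the elements of the ideal `J` generated by the cyclic derivatives have no constant term
over `F` at `i` and at `j`. Then along arrays from `j` to `i`, up to bounded rank, the elements of
`J` are combinations of the derivatives with respect to the arrows `i ⟶ j`. -/
lemma blockMat_jacSpan_mem {φ : C.A}
    (hj : ∀ y ∈ C.jacSpan φ, ρ (C.coeff (Path.nil : Path j j) y) = 0)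
    (hi : ∀ y ∈ C.jacSpan φ, ρ (C.coeff (Path.nil : Path i i) y) = 0)
    {z : C.A} (hz : z ∈ C.jacSpan φ) :
    blockMat C ρ B z ∈ bddRank F sz ⊔
      Submodule.span F (Set.range fun a : i ⟶ j => blockMat C ρ B (C.cycDeriv a φ)) := by
  refine Submodule.span_induction ?_ ?_ ?_ ?_ hz
  · rintro _ ⟨i', j', a, u, v, rfl⟩
    set D := C.cycDeriv a φ with hD
    have hDJ : D ∈ C.jacSpan φ := Submodule.subset_span ⟨i', j', a, 1, 1, by simp [hD]⟩
    set c := C.coeff (Path.nil : Path j j) u with hc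
    set d := C.coeff (Path.nil : Path i i) v with hd
    have e : u * D * v = (u - c • 1) * (D * v) + ((c • D) * (v - d • 1) + (c * d) • D) := by
      simp only [sub_mul, mul_sub, smul_mul_assoc, one_mul, mul_smul_comm, mul_one, mul_assoc,
        mul_smul]
      rw [smul_comm d c]
      abel
    rw [e, blockMat_add, blockMat_add, blockMat_smul]
    have h1 : blockMat C ρ B ((u - c • 1) * (D * v)) ∈ bddRank F sz := by
      refine blockMat_mul_mem C ρ B ?_ (hi _ (jacSpan_mul_right C φ v hDJ))
      simp [C.coeff_one, hc]
    have h2 : blockMat C ρ B ((c • D) * (v - d • 1)) ∈ bddRank F sz := by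
      refine blockMat_mul_mem C ρ B (hj _ (Submodule.smul_mem _ _ hDJ)) ?_
      simp [C.coeff_one, hd]
    refine add_mem (Submodule.mem_sup_left h1) (add_mem (Submodule.mem_sup_left h2) ?_)
    refine Submodule.smul_mem _ _ ?_
    by_cases h : j = j' ∧ i = i'
    · obtain ⟨rfl, rfl⟩ := h
      exact Submodule.mem_sup_right (Submodule.subset_span ⟨a, rfl⟩)
    · have : blockMat C ρ B D = 0 := by
        ext e a' b'
        simp [blockMat, hD, coeff_cycDeriv_ne C a φ _ h]
      rw [this]
      exact zero_mem _
  · have : blockMat C ρ B (0 : C.A) = 0 := by ext; simp [blockMat]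
    rw [this]
    exact zero_mem _
  · intro y z _ _ hy hz
    rw [blockMat_add]
    exact add_mem hy hz
  · intro c y _ hy
    rw [blockMat_smul]
    exact Submodule.smul_mem _ _ hy

/-- If the Jacobi ideal contains `m̂^(r-1)` and has no constant terms over `F` at `i` and `j`, there
cannot be a family of arrays of unbounded sizes, with pairwise distinct first arrows, indexed by
`ι × ℕ`, where `ι` indexes a cofinal family `T` of finite sets of arrows `i ⟶ j`. The proof is a
diagonal argument: for every `e` there is a sum of diagonal entries of the arrays `(e, N)` which is
no combination of the derivatives with respect to the arrows of `T e` up to bounded rank, and the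
sum of all these series is an element of `m̂^(r-1)`, which thus needs infinitely many of the
derivatives. -/
lemma false_of_family {φ : C.A} {r : ℕ} (hJ : C.mpow (r - 1) ≤ C.jac φ) (hn : r - 1 ≤ n)
    (hj : ∀ y ∈ C.jacSpan φ, ρ (C.coeff (Path.nil : Path j j) y) = 0)
    (hi : ∀ y ∈ C.jacSpan φ, ρ (C.coeff (Path.nil : Path i i) y) = 0)
    {ι : Type*} {sz : ι × ℕ → ℕ} (hsz : ∀ e, e.2 ≤ sz e)
    (B : ∀ e, Block j i n (sz e))
    (hB : Function.Injective fun q : Σ e, Fin (sz e) => (B q.1).first q.2)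
    (T : ι → Finset (i ⟶ j)) (hT : ∀ G : Finset (i ⟶ j), ∃ e, G ⊆ T e) : False := by
  let D (e : ι) (a : i ⟶ j) : ∀ N : ℕ, Matrix (Fin (sz (e, N))) (Fin (sz (e, N))) F :=
    fun N => blockMat C ρ B (C.cycDeriv a φ) (e, N)
  have hex (e : ι) : ∃ S : Set ℕ, idOn F (fun N => sz (e, N)) S ∉
      bddRank F (fun N => sz (e, N)) ⊔ Submodule.span F (D e '' (T e : Set (i ⟶ j))) :=
    exists_idOn_notMem (fun N => sz (e, N)) (fun N => hsz (e, N))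
      ((T e).finite_toSet.image (D e))
  choose S hS using hex
  let P (p : Σ a b : V, Path a b) : Prop :=
    ∃ (e : ι) (N : ℕ) (a : Fin (sz (e, N))), N ∈ S e ∧ p = ⟨j, i, (B (e, N)).path a a⟩
  let z : C.A := C.ofCoeff fun l m p => if P ⟨l, m, p⟩ then 1 else 0
  have hz : z ∈ C.mpow n := by
    intro l m p hp
    rw [C.coeff_ofCoeff, if_neg]
    rintro ⟨e, N, a, -, h⟩
    have h2 : p.length = n := by
      have h3 : (fun q : Σ a b : V, Path a b => q.2.2.length) ⟨l, m, p⟩ = _ :=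
        congrArg (fun q : Σ a b : V, Path a b => q.2.2.length) h
      exact h3.trans ((B (e, N)).length_path a a)
    omega
  have hzJ : z ∈ C.jacSpan φ ⊔ C.mpow (n + 1) :=
    (Submodule.mem_iInf _).1 (hJ (C.mpow_antitone hn hz)) (n + 1)
  obtain ⟨y, hy, w, hw, hyw⟩ := Submodule.mem_sup.1 hzJ
  have hzy : blockMat C ρ B z = blockMat C ρ B y := by
    rw [← hyw, blockMat_add]
    have : blockMat C ρ B w = 0 := by
      ext e a b
      simp only [blockMat, Matrix.of_apply, Pi.zero_apply, Matrix.zero_apply]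
      rw [hw _ (by rw [Block.length_path]; omega), map_zero]
    rw [this, add_zero]
  obtain ⟨u, hu, v, hv, huv⟩ := Submodule.mem_sup.1 (blockMat_jacSpan_mem C ρ B hj hi hy)
  obtain ⟨c, hc⟩ := Finsupp.mem_span_range_iff_exists_finsupp.1 hv
  obtain ⟨e, he⟩ := hT c.support
  apply hS e
  have hid : idOn F (fun N => sz (e, N)) (S e) = fun N => blockMat C ρ B z (e, N) := by
    funext N
    ext a b
    simp only [blockMat, Matrix.of_apply, z, C.coeff_ofCoeff]
    by_cases hN : N ∈ S e
    · by_cases hab : a = b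
      · subst hab
        rw [if_pos ⟨e, N, a, hN, rfl⟩]
        simp [idOn, hN]
      · rw [if_neg]
        · simp [idOn, hN, hab]
        · rintro ⟨e', N', a', -, h⟩
          have h' : (B (e, N)).path a b = (B (e', N')).path a' a' := by simpa using h
          obtain ⟨h1, h2⟩ := Block.eq_of_path_eq _ _ h'
          have h3 := @hB ⟨(e, N), a⟩ ⟨(e', N'), a'⟩ h1
          obtain ⟨h4, h5⟩ := Sigma.mk.inj h3
          obtain ⟨rfl, rfl⟩ := Prod.mk.inj h4
          obtain rfl := eq_of_heq h5
          have h6 : (B (e, N)).y b = (B (e, N)).y a := by simpa using h2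
          exact hab ((B (e, N)).y.injective h6).symm
    · rw [if_neg]
      · simp [idOn, hN]
      · rintro ⟨e', N', a', hN', h⟩
        have h' : (B (e, N)).path a b = (B (e', N')).path a' a' := by simpa using h
        obtain ⟨h1, -⟩ := Block.eq_of_path_eq _ _ h'
        have h3 := @hB ⟨(e, N), a⟩ ⟨(e', N'), a'⟩ h1
        obtain ⟨h4, -⟩ := Sigma.mk.inj h3
        obtain ⟨rfl, rfl⟩ := Prod.mk.inj h4
        exact hN hN'
  rw [hid, hzy, ← huv]
  change (fun N => u (e, N)) + (fun N => v (e, N)) ∈ _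
  refine Submodule.add_mem_sup ?_ ?_
  · obtain ⟨K, hK⟩ := hu
    exact ⟨K, fun N => hK (e, N)⟩
  · have hv' : (fun N => v (e, N)) = c.sum fun a t => t • D e a := by
      rw [← hc]
      funext N
      simp only [Finsupp.sum, Finset.sum_apply, Pi.smul_apply]
      rfl
    rw [hv']
    refine Submodule.sum_mem _ fun a ha => Submodule.smul_mem _ _ (Submodule.subset_span ?_)
    exact ⟨a, he ha, rfl⟩

/-- The case of `not_bad` in which there are finitely many arrows `i ⟶ j`. -/
lemma not_bad_of_finite {φ : C.A} {r : ℕ} (hJ : C.mpow (r - 1) ≤ C.jac φ) (hn : r - 1 ≤ n)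
    (hj : ∀ y ∈ C.jacSpan φ, ρ (C.coeff (Path.nil : Path j j) y) = 0)
    (hi : ∀ y ∈ C.jacSpan φ, ρ (C.coeff (Path.nil : Path i i) y) = 0)
    [Finite (i ⟶ j)] : ¬ Bad j i n := by
  intro hbad
  have := Fintype.ofFinite (i ⟶ j)
  obtain ⟨sz, B, hsz, hB⟩ := hbad.exists_seq
  refine false_of_family C ρ hJ hn hj hi (ι := Unit) (sz := fun e => sz e.2)
    (fun e => hsz e.2) (fun e => B e.2) ?_ (fun _ => Finset.univ)
    (fun G => ⟨(), Finset.subset_univ G⟩)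
  rintro ⟨⟨⟨⟩, e⟩, a⟩ ⟨⟨⟨⟩, e'⟩, a'⟩ h
  have h1 := @hB ⟨e, a⟩ ⟨e', a'⟩ h
  obtain ⟨rfl, h2⟩ := Sigma.mk.inj h1
  obtain rfl := eq_of_heq h2
  rfl

/-- A vertex at which the Jacobi ideal has no constant terms carries finitely many loops only:
otherwise the loops themselves can be arranged into arrays of paths. -/
lemma finite_loops {φ : C.A} {r : ℕ} (hJ : C.mpow (r - 1) ≤ C.jac φ)
    (hi : ∀ y ∈ C.jacSpan φ, ρ (C.coeff (Path.nil : Path i i) y) = 0) : Finite (i ⟶ i) := by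
  by_contra hfin
  have hinf : Infinite (i ⟶ i) := not_finite_iff_infinite.1 hfin
  have hcard : Cardinal.mk (Finset (i ⟶ i) × (Σ N : ℕ, Fin N)) ≤ Cardinal.mk (i ⟶ i) := by
    rw [Cardinal.mk_prod, Cardinal.mk_finset_of_infinite, Cardinal.lift_id']
    refine (mul_le_mul_right (Cardinal.lift_le_aleph0.2 Cardinal.mk_le_aleph0) _).trans ?_
    rw [Cardinal.mul_aleph0_eq (Cardinal.aleph0_le_mk _)]
  obtain ⟨lam⟩ := hcard
  have l0 : i ⟶ i := Classical.arbitrary _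
  have hpath (m : ℕ) : ∃ w : Path i i, w.length = m := by
    induction m with
    | zero => exact ⟨Path.nil, rfl⟩
    | succ m ih =>
      obtain ⟨w, hw⟩ := ih
      exact ⟨w.cons l0, by rw [Path.length_cons, hw]⟩
  obtain ⟨w, hw⟩ := hpath r
  let x (e : Finset (i ⟶ i) × ℕ) : Fin e.2 ↪ (i ⟶ i) :=
    ⟨fun a => lam (e.1, ⟨e.2, a⟩), fun a b h => by simpa using lam.injective h⟩
  refine false_of_family C ρ (n := r + 2) hJ (by omega) hi hi (ι := Finset (i ⟶ i))
    (sz := fun e => e.2) (fun e => le_rfl)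
    (fun e => { src := i, tgt := i, mid := w, length_mid := by rw [hw], x := x e, y := x e }) ?_ id (fun G => ⟨G, subset_rfl⟩)
  rintro ⟨⟨G, N⟩, a⟩ ⟨⟨G', N'⟩, a'⟩ h
  have h1 : lam (G, ⟨N, a⟩) = lam (G', ⟨N', a'⟩) := by
    have h1 := (Sigma.mk.inj h).2
    exact eq_of_heq h1
  obtain ⟨rfl, h2⟩ := Prod.mk.inj (lam.injective h1)
  obtain ⟨rfl, h3⟩ := Sigma.mk.inj h2
  obtain rfl := eq_of_heq h3
  rfl

/-- If the Jacobi ideal contains `m̂^(r-1)` and has no constant terms over `F` at `i` and at `j`,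
then the arrays of paths from `j` to `i` have bounded size. If there are infinitely many arrows
`i ⟶ j`, then putting them in front of arrays from `j` to `i` yields arrays from `i` to `i`, and the
statement reduces to the finiteness of the set of loops at `i`. -/
lemma not_bad {φ : C.A} {r : ℕ} (hJ : C.mpow (r - 1) ≤ C.jac φ) (hn : r - 1 ≤ n)
    (hj : ∀ y ∈ C.jacSpan φ, ρ (C.coeff (Path.nil : Path j j) y) = 0)
    (hi : ∀ y ∈ C.jacSpan φ, ρ (C.coeff (Path.nil : Path i i) y) = 0) : ¬ Bad j i n := by
  rcases finite_or_infinite (i ⟶ j) with hfin | hinf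
  · exact not_bad_of_finite C ρ hJ hn hj hi
  · intro hbad
    have := finite_loops C ρ hJ hi
    refine not_bad_of_finite C ρ (n := n + 1) hJ (by omega) hi hi fun N => ?_
    obtain ⟨B⟩ := hbad (N + 1)
    refine ⟨⟨j, B.tgt, (B.x 0).toPath.comp B.mid, ?_, ?_, ?_⟩⟩
    · have := B.length_mid
      rw [Path.length_comp, Path.length_toPath]
      omega
    · exact Fin.valEmbedding.trans (Infinite.natEmbedding _)
    · exact Fin.castSuccEmb.trans B.y

end Core

/-! ### Factoring series along first or last arrows -/

section Factor

variable {k V : Type} [CommRing k] [Quiver.{1} V] (C : CompletePathAlgebra k V)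

/-- For a series `u` of arrows, only the cut after the first arrow contributes to `u * g`. -/
lemma coeff_toPath_comp_mul {u : C.A}
    (hu : ∀ {i j : V} (p : Path i j), p.length ≠ 1 → C.coeff p u = 0) (g : C.A)
    {i m j : V} (x : i ⟶ m) (q : Path m j) :
    C.coeff (x.toPath.comp q) (u * g) = C.coeff x.toPath u * C.coeff q g := by
  obtain ⟨L, hL, hpos⟩ := pathSplits_eq_append q
  have hz : (L.map fun s => C.coeff (x.toPath.comp s.2.1) u * C.coeff s.2.2 g).sum = 0 := by
    apply List.sum_eq_zero
    intro t ht
    obtain ⟨s, hs, rfl⟩ := List.mem_map.1 ht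
    have := hpos s hs
    rw [hu _ (by rw [Path.length_comp, Path.length_toPath]; omega), zero_mul]
  rw [C.coeff_mul, pathSplits_toPath_comp, hL]
  simp [Function.comp_def, hz, hu (Path.nil : Path i i) (by simp)]

lemma coeff_cons_mul {u : C.A}
    (hu : ∀ {i j : V} (p : Path i j), p.length ≠ 1 → C.coeff p u = 0) (g : C.A)
    {i m j : V} (q : Path i m) (y : m ⟶ j) :
    C.coeff (q.cons y) (g * u) = C.coeff q g * C.coeff y.toPath u := by
  obtain ⟨L, hL, hpos⟩ := pathSplits_eq_cons q
  have hz : (L.map fun s => C.coeff s.2.1 g * C.coeff (s.2.2.cons y) u).sum = 0 := by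
    apply List.sum_eq_zero
    intro t ht
    obtain ⟨s, hs, rfl⟩ := List.mem_map.1 ht
    have := hpos s hs
    rw [hu _ (by rw [Path.length_cons]; omega), mul_zero]
  rw [C.coeff_mul, pathSplits, hL]
  simp [Function.comp_def, hz, hu (Path.nil : Path j j) (by simp), Hom.toPath]

/-- Simultaneous labellings, by numbers less than `N`, of all the `X m` with fewer than `N`
elements. -/
lemma exists_labelling {ι : Type*} (X : ι → Type*) (N : ℕ) : ∃ f : ∀ m, X m → ℕ,
    ∀ m, ¬ Nonempty (Fin N ↪ X m) → Function.Injective (f m) ∧ ∀ x, f m x < N := by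
  have h (m : ι) : ∃ f : X m → ℕ,
      ¬ Nonempty (Fin N ↪ X m) → Function.Injective f ∧ ∀ x, f x < N := by
    by_cases hm : Nonempty (Fin N ↪ X m)
    · exact ⟨fun _ => 0, fun h => absurd hm h⟩
    · rcases Function.Embedding.total (X m) (Fin N) with h | h
      · obtain ⟨g⟩ := h
        exact ⟨fun x => g x, fun _ => ⟨fun a b hab => g.injective (Fin.ext hab),
          fun x => (g x).isLt⟩⟩
      · exact absurd h hm
  choose f hf using h
  exact ⟨f, hf⟩

lemma exists_eq_toPath_comp {i j : V} (p : Path i j) (hp : 0 < p.length) :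
    ∃ (m : V) (x : i ⟶ m) (q : Path m j), p = x.toPath.comp q := by
  induction p with
  | nil => simp at hp
  | @cons m' j p e ih =>
    rcases Nat.eq_zero_or_pos p.length with h | h
    · cases p with
      | nil => exact ⟨_, e, Path.nil, rfl⟩
      | cons p f => simp at h
    · obtain ⟨m, x, q, rfl⟩ := ih h
      exact ⟨m, x, q.cons e, rfl⟩

/-- A series of paths starting at `j`, whose first arrows have few parallel arrows, is a finite sum
of products with a left factor in `m̂`: label the arrows `j ⟶ m` by numbers `t < N`, for each such
`m`, and collect the paths according to the label of the first arrow. -/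
lemma mem_of_few_first {n N : ℕ} (hn : 0 < n) {δ : C.A} (hδ : δ ∈ C.mpow n) (j : V)
    (hs : ∀ {a m b : V} (x : a ⟶ m) (q : Path m b), C.coeff (x.toPath.comp q) δ ≠ 0 →
      a = j ∧ ¬ Nonempty (Fin N ↪ (j ⟶ m)))
    (M : Submodule k C.A) (hM : ∀ u ∈ C.mpow 1, ∀ g ∈ C.mpow (n - 1), u * g ∈ M) : δ ∈ M := by
  obtain ⟨f, hf⟩ := exists_labelling (fun m : V => (j ⟶ m)) N
  let P (t : ℕ) (p : Σ a b : V, Path a b) : Prop :=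
    ∃ (m : V) (x : j ⟶ m), ¬ Nonempty (Fin N ↪ (j ⟶ m)) ∧ f m x = t ∧ p = ⟨j, m, x.toPath⟩
  let u (t : ℕ) : C.A := C.ofCoeff fun a b p => if P t ⟨a, b, p⟩ then 1 else 0
  let g (t : ℕ) : C.A := C.ofCoeff fun m b q =>
    if h : ∃ x : j ⟶ m, ¬ Nonempty (Fin N ↪ (j ⟶ m)) ∧ f m x = t then
      C.coeff (h.choose.toPath.comp q) δ else 0
  have hu (t : ℕ) : ∀ {a b : V} (p : Path a b), p.length ≠ 1 → C.coeff p (u t) = 0 := by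
    intro a b p hp
    rw [C.coeff_ofCoeff, if_neg]
    rintro ⟨m, x, -, -, h⟩
    have h3 : p.length = x.toPath.length :=
      congrArg (fun q : Σ a b : V, Path a b => q.2.2.length) h
    exact hp (h3.trans (Path.length_toPath x))
  have hg (t : ℕ) : g t ∈ C.mpow (n - 1) := by
    intro m b q hq
    rw [C.coeff_ofCoeff]
    split_ifs with h
    · exact hδ _ (by rw [Path.length_comp, Path.length_toPath]; omega)
    · rfl
  have hsum : δ = ∑ t ∈ Finset.range N, u t * g t := by
    apply C.coeff_ext
    intro a b p
    rw [map_sum]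
    rcases Nat.eq_zero_or_pos p.length with hp | hp
    · rw [hδ p (by omega), Finset.sum_eq_zero]
      intro t _
      have : u t * g t ∈ C.mpow (1 + 0) :=
        mul_mem_mpow C (fun _ _ p hp => hu t p (by omega)) (mem_mpow_zero C _)
      exact this p (by omega)
    · obtain ⟨m, x, q, rfl⟩ := exists_eq_toPath_comp p hp
      simp only [fun t => coeff_toPath_comp_mul C (hu t)]
      by_cases hx : a = j ∧ ¬ Nonempty (Fin N ↪ (j ⟶ m))
      · obtain ⟨rfl, hm⟩ := hx
        rw [Finset.sum_eq_single (f m x)]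
        · have h1 : C.coeff x.toPath (u (f m x)) = 1 := by
            rw [C.coeff_ofCoeff, if_pos]
            exact ⟨m, x, hm, rfl, rfl⟩
          have h2 : ∃ x' : a ⟶ m, ¬ Nonempty (Fin N ↪ (a ⟶ m)) ∧ f m x' = f m x := ⟨x, hm, rfl⟩
          have h3 : C.coeff q (g (f m x)) = C.coeff (x.toPath.comp q) δ := by
            rw [C.coeff_ofCoeff, dif_pos h2, (hf m hm).1 h2.choose_spec.2]
          rw [h1, h3, one_mul]
        · intro t _ ht
          have h1 : C.coeff x.toPath (u t) = 0 := by
            rw [C.coeff_ofCoeff, if_neg]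
            rintro ⟨m', x', -, hx', h⟩
            obtain ⟨-, h⟩ := Sigma.mk.inj h
            obtain ⟨rfl, h⟩ := Sigma.mk.inj (eq_of_heq h)
            have h4 : x = x' := by simpa [Hom.toPath] using h
            exact ht (by rw [← hx', h4])
          rw [h1, zero_mul]
        · intro h
          exact absurd (Finset.mem_range.2 ((hf m hm).2 x)) h
      · have h0 : C.coeff (x.toPath.comp q) δ = 0 := by
          by_contra h
          exact hx (hs x q h)
        rw [h0, Finset.sum_eq_zero]
        intro t _
        have h1 : C.coeff x.toPath (u t) = 0 := by
          rw [C.coeff_ofCoeff, if_neg]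
          rintro ⟨m', x', hm', -, h⟩
          obtain ⟨rfl, h⟩ := Sigma.mk.inj h
          obtain ⟨rfl, -⟩ := Sigma.mk.inj (eq_of_heq h)
          exact hx ⟨rfl, hm'⟩
        rw [h1, zero_mul]
  rw [hsum]
  exact Submodule.sum_mem _ fun t _ => hM _ (fun _ _ p hp => hu t p (by omega)) _ (hg t)

/-- The mirror image of `mem_of_few_first`. -/
lemma mem_of_few_last {n N : ℕ} (hn : 0 < n) {δ : C.A} (hδ : δ ∈ C.mpow n) (i : V)
    (hs : ∀ {a m b : V} (q : Path a m) (y : m ⟶ b), C.coeff (q.cons y) δ ≠ 0 →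
      b = i ∧ ¬ Nonempty (Fin N ↪ (m ⟶ i)))
    (M : Submodule k C.A) (hM : ∀ u ∈ C.mpow 1, ∀ g ∈ C.mpow (n - 1), g * u ∈ M) : δ ∈ M := by
  obtain ⟨f, hf⟩ := exists_labelling (fun m : V => (m ⟶ i)) N
  let P (t : ℕ) (p : Σ a b : V, Path a b) : Prop :=
    ∃ (m : V) (y : m ⟶ i), ¬ Nonempty (Fin N ↪ (m ⟶ i)) ∧ f m y = t ∧ p = ⟨m, i, y.toPath⟩
  let u (t : ℕ) : C.A := C.ofCoeff fun a b p => if P t ⟨a, b, p⟩ then 1 else 0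
  let g (t : ℕ) : C.A := C.ofCoeff fun a m q =>
    if h : ∃ y : m ⟶ i, ¬ Nonempty (Fin N ↪ (m ⟶ i)) ∧ f m y = t then
      C.coeff (q.cons h.choose) δ else 0
  have hu (t : ℕ) : ∀ {a b : V} (p : Path a b), p.length ≠ 1 → C.coeff p (u t) = 0 := by
    intro a b p hp
    rw [C.coeff_ofCoeff, if_neg]
    rintro ⟨m, y, -, -, h⟩
    have h3 : p.length = y.toPath.length :=
      congrArg (fun q : Σ a b : V, Path a b => q.2.2.length) h
    exact hp (h3.trans (Path.length_toPath y))
  have hg (t : ℕ) : g t ∈ C.mpow (n - 1) := by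
    intro m b q hq
    rw [C.coeff_ofCoeff]
    split_ifs with h
    · exact hδ _ (by rw [Path.length_cons]; omega)
    · rfl
  have hsum : δ = ∑ t ∈ Finset.range N, g t * u t := by
    apply C.coeff_ext
    intro a b p
    rw [map_sum]
    cases p with
    | nil =>
      rw [hδ _ (by simpa using hn), Finset.sum_eq_zero]
      intro t _
      have : g t * u t ∈ C.mpow (0 + 1) :=
        mul_mem_mpow C (mem_mpow_zero C _) (fun _ _ p hp => hu t p (by omega))
      exact this _ (by simp)
    | @cons m _ q y =>
      simp only [fun t => coeff_cons_mul C (hu t)]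
      by_cases hy : b = i ∧ ¬ Nonempty (Fin N ↪ (m ⟶ i))
      · obtain ⟨rfl, hm⟩ := hy
        rw [Finset.sum_eq_single (f m y)]
        · have h1 : C.coeff y.toPath (u (f m y)) = 1 := by
            rw [C.coeff_ofCoeff, if_pos]
            exact ⟨m, y, hm, rfl, rfl⟩
          have h2 : ∃ y' : m ⟶ b, ¬ Nonempty (Fin N ↪ (m ⟶ b)) ∧ f m y' = f m y := ⟨y, hm, rfl⟩
          have h3 : C.coeff q (g (f m y)) = C.coeff (q.cons y) δ := by
            rw [C.coeff_ofCoeff, dif_pos h2, (hf m hm).1 h2.choose_spec.2]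
          rw [h1, h3, mul_one]
        · intro t _ ht
          have h1 : C.coeff y.toPath (u t) = 0 := by
            rw [C.coeff_ofCoeff, if_neg]
            rintro ⟨m', y', -, hy', h⟩
            obtain ⟨rfl, h⟩ := Sigma.mk.inj h
            have h4 : y = y' := by simpa [Hom.toPath] using h
            exact ht (by rw [← hy', h4])
          rw [h1, mul_zero]
        · intro h
          exact absurd (Finset.mem_range.2 ((hf m hm).2 y)) h
      · have h0 : C.coeff (q.cons y) δ = 0 := by
          by_contra h
          exact hy (hs q y h)
        rw [h0, Finset.sum_eq_zero]
        intro t _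
        have h1 : C.coeff y.toPath (u t) = 0 := by
          rw [C.coeff_ofCoeff, if_neg]
          rintro ⟨m', y', hm', -, h⟩
          obtain ⟨rfl, h⟩ := Sigma.mk.inj h
          obtain ⟨rfl, -⟩ := Sigma.mk.inj (eq_of_heq h)
          exact hy ⟨rfl, hm'⟩
        rw [h1, mul_zero]
  rw [hsum]
  exact Submodule.sum_mem _ fun t _ => hM _ (fun _ _ p hp => hu t p (by omega)) _ (hg t)

/-- If arrays of paths of length `n` from `j` to `i` have bounded size, then a homogeneous series of
such paths is a finite sum of products with a factor in `m̂`. -/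
lemma mem_of_not_bad {j i : V} {n : ℕ} (hn : 2 ≤ n) (hbad : ¬ Bad j i n) {δ : C.A}
    (hδ : ∀ {a b : V} (p : Path a b), C.coeff p δ ≠ 0 → a = j ∧ b = i ∧ p.length = n)
    (M : Submodule k C.A) (hM : ∀ u ∈ C.mpow 1, ∀ g ∈ C.mpow (n - 1), u * g ∈ M)
    (hM' : ∀ u ∈ C.mpow 1, ∀ g ∈ C.mpow (n - 1), g * u ∈ M) : δ ∈ M := by
  obtain ⟨N, hN⟩ := not_forall.1 hbad
  let S (p : Σ a b : V, Path a b) : Prop :=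
    ∃ (m : V) (x : p.1 ⟶ m) (q : Path m p.2.1),
      p.2.2 = x.toPath.comp q ∧ ¬ Nonempty (Fin N ↪ (p.1 ⟶ m))
  let y₁ : C.A := C.ofCoeff fun a b p => if S ⟨a, b, p⟩ then C.coeff p δ else 0
  let y₂ : C.A := C.ofCoeff fun a b p => if S ⟨a, b, p⟩ then 0 else C.coeff p δ
  have hsum : δ = y₁ + y₂ := by
    apply C.coeff_ext
    intro a b p
    rw [map_add, C.coeff_ofCoeff, C.coeff_ofCoeff]
    split_ifs <;> simp
  have h₁ {a b : V} (p : Path a b) (hp : C.coeff p y₁ ≠ 0) : S ⟨a, b, p⟩ ∧ C.coeff p δ ≠ 0 := by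
    rw [C.coeff_ofCoeff] at hp
    split_ifs at hp with h
    · exact ⟨h, hp⟩
    · exact absurd rfl hp
  have h₂ {a b : V} (p : Path a b) (hp : C.coeff p y₂ ≠ 0) :
      ¬ S ⟨a, b, p⟩ ∧ C.coeff p δ ≠ 0 := by
    rw [C.coeff_ofCoeff] at hp
    split_ifs at hp with h
    · exact absurd rfl hp
    · exact ⟨h, hp⟩
  rw [hsum]
  refine add_mem (mem_of_few_first C (n := n) (N := N) (by omega) ?_ j ?_ M hM)
    (mem_of_few_last C (n := n) (N := N) (by omega) ?_ i ?_ M hM')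
  · intro a b p hp
    by_contra h
    have := (hδ p (h₁ p h).2).2.2
    omega
  · intro a m b x q h
    obtain ⟨⟨m', x', q', h1, h2⟩, h3⟩ := h₁ _ h
    obtain ⟨rfl, -, -⟩ := hδ _ h3
    obtain ⟨rfl, -⟩ := Sigma.mk.inj (first_eq_of_comp_eq x q x' q' h1)
    exact ⟨rfl, h2⟩
  · intro a b p hp
    by_contra h
    have := (hδ p (h₂ p h).2).2.2
    omega
  · intro a m b q y h
    obtain ⟨h1, h3⟩ := h₂ _ h
    obtain ⟨rfl, rfl, h4⟩ := hδ _ h3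
    rw [Path.length_cons] at h4
    refine ⟨rfl, fun ⟨ey⟩ => ?_⟩
    obtain ⟨m', x, w, rfl⟩ := exists_eq_toPath_comp q (by omega)
    rw [Path.length_comp, Path.length_toPath] at h4
    refine h1 ⟨m', x, w.cons y, rfl, fun ⟨ex⟩ => hN ⟨⟨m', m, w, by omega, ex, ey⟩⟩⟩

/-- The inhomogeneous version of `mem_of_not_bad`, modulo a power of `m̂`. -/
lemma mem_of_forall_not_bad {j i : V} {r s : ℕ} (hr : 2 ≤ r) (hbad : ∀ n, r ≤ n → ¬ Bad j i n)
    (M : Submodule k C.A) (hs : C.mpow s ≤ M)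
    (hM : ∀ u ∈ C.mpow 1, ∀ g ∈ C.mpow (r - 1), u * g ∈ M)
    (hM' : ∀ u ∈ C.mpow 1, ∀ g ∈ C.mpow (r - 1), g * u ∈ M) {n : ℕ} (hn : r ≤ n) {δ : C.A}
    (hδ : ∀ {a b : V} (p : Path a b), C.coeff p δ ≠ 0 → a = j ∧ b = i) (hδn : δ ∈ C.mpow n) :
    δ ∈ M := by
  induction h : s - n generalizing n δ with
  | zero => exact hs (C.mpow_antitone (by omega) hδn)
  | succ d ih =>
    let y₁ : C.A := C.ofCoeff fun a b p => if p.length = n then C.coeff p δ else 0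
    let y₂ : C.A := C.ofCoeff fun a b p => if p.length = n then 0 else C.coeff p δ
    have hsum : δ = y₁ + y₂ := by
      apply C.coeff_ext
      intro a b p
      rw [map_add, C.coeff_ofCoeff, C.coeff_ofCoeff]
      split_ifs <;> simp
    rw [hsum]
    refine add_mem ?_ (ih (n := n + 1) (by omega) ?_ ?_ (by omega))
    · refine mem_of_not_bad C (by omega) (hbad n hn) ?_ M
        (fun u hu g hg => hM u hu g (C.mpow_antitone (by omega) hg))
        (fun u hu g hg => hM' u hu g (C.mpow_antitone (by omega) hg))
      intro a b p hp
      rw [C.coeff_ofCoeff] at hp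
      split_ifs at hp with h
      · exact ⟨(hδ p hp).1, (hδ p hp).2, h⟩
      · exact absurd rfl hp
    · intro a b p hp
      rw [C.coeff_ofCoeff] at hp
      split_ifs at hp with h
      · exact absurd rfl hp
      · exact hδ p hp
    · intro a b p hp
      rw [C.coeff_ofCoeff]
      split_ifs with h
      · rfl
      · exact hδn p (by omega)

end Factor

/-! ### The Nakayama argument -/

section Nakayama

variable {k V : Type} [CommRing k] [Quiver.{1} V] (C : CompletePathAlgebra k V)

lemma coeff_pathE_nil_mul (l : V) (x : C.A) {a b : V} (p : Path a b) :
    C.coeff p (C.pathE (Path.nil : Path l l) * x) = if a = l then C.coeff p x else 0 := by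
  obtain ⟨L, hL, hpos⟩ := pathSplits_eq_append p
  have hz : (L.map fun s => C.coeff s.2.1 (C.pathE (Path.nil : Path l l)) * C.coeff s.2.2 x).sum
      = 0 := by
    apply List.sum_eq_zero
    intro t ht
    obtain ⟨s, hs, rfl⟩ := List.mem_map.1 ht
    have := hpos s hs
    rw [C.coeff_pathE, if_neg, zero_mul]
    intro h
    have h3 : 0 = s.2.1.length := congrArg (fun q : Σ a b : V, Path a b => q.2.2.length) h
    omega
  have hc : C.coeff (Path.nil : Path a a) (C.pathE (Path.nil : Path l l)) =
      if a = l then 1 else 0 := by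
    rw [C.coeff_pathE]
    by_cases h : a = l
    · subst h; simp
    · rw [if_neg h, if_neg]
      intro h'
      exact h (Sigma.mk.inj h').1.symm
  rw [C.coeff_mul, hL]
  simp only [List.map_append, List.sum_append, hz, List.map_cons, List.map_nil, List.sum_cons,
    List.sum_nil, hc]
  split_ifs <;> simp

lemma coeff_mul_pathE_nil (l : V) (x : C.A) {a b : V} (p : Path a b) :
    C.coeff p (x * C.pathE (Path.nil : Path l l)) = if b = l then C.coeff p x else 0 := by
  obtain ⟨L, hL, hpos⟩ := pathSplits_eq_cons p
  have hz : (L.map fun s => C.coeff s.2.1 x * C.coeff s.2.2 (C.pathE (Path.nil : Path l l))).sum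
      = 0 := by
    apply List.sum_eq_zero
    intro t ht
    obtain ⟨s, hs, rfl⟩ := List.mem_map.1 ht
    have := hpos s hs
    rw [C.coeff_pathE, if_neg, mul_zero]
    intro h
    have h3 : 0 = s.2.2.length := congrArg (fun q : Σ a b : V, Path a b => q.2.2.length) h
    omega
  have hc : C.coeff (Path.nil : Path b b) (C.pathE (Path.nil : Path l l)) =
      if b = l then 1 else 0 := by
    rw [C.coeff_pathE]
    by_cases h : b = l
    · subst h; simp
    · rw [if_neg h, if_neg]
      intro h'
      exact h (Sigma.mk.inj h').1.symm
  rw [C.coeff_mul, hL]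
  simp only [List.map_cons, List.sum_cons, hz, hc]
  split_ifs <;> simp

/-- The ideal of the constant terms at the vertex `l` of the elements of the ideal generated by the
cyclic derivatives of `φ`. -/
def constTerms (φ : C.A) (l : V) : Ideal k :=
  (C.jacSpan φ).map (C.coeff (Path.nil : Path l l))

lemma smul_pathE_mem {φ : C.A} {l : V} {c : k} (hc : c ∈ constTerms C φ l) :
    c • C.pathE (Path.nil : Path l l) ∈ C.jacSpan φ ⊔ C.mpow 1 := by
  obtain ⟨y, hy, rfl⟩ := hc
  set e := C.pathE (Path.nil : Path l l) with he
  have h1 : e * y * e ∈ C.jacSpan φ := jacSpan_mul_right C φ _ (jacSpan_mul_left C φ _ hy)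
  have h2 : C.coeff (Path.nil : Path l l) y • e - e * y * e ∈ C.mpow 1 := by
    intro a b p hp
    cases p with
    | cons p f => simp at hp
    | nil =>
      rw [map_sub, map_smul, he, coeff_mul_pathE_nil, coeff_pathE_nil_mul, C.coeff_pathE]
      by_cases h : a = l
      · subst h; simp
      · rw [if_neg h, if_neg, smul_zero, sub_zero]
        intro h'
        exact h (Sigma.mk.inj h').1.symm
  rw [← sub_add_cancel (C.coeff (Path.nil : Path l l) y • e) (e * y * e)]
  exact add_mem (Submodule.mem_sup_right h2) (Submodule.mem_sup_left h1)

/-- An element of `J + m̂^s` lying in `e_j · k̂Q · e_i` lies in `J + m̂^(s+1)` as soon as the constant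
terms of `J` at `i` and at `j` generate the unit ideal. -/
lemma mem_sup_succ_of_constTerms {φ : C.A} {i j : V}
    (hI : constTerms C φ i ⊔ constTerms C φ j = ⊤) {s : ℕ} {δ : C.A}
    (hδ : ∀ {a b : V} (p : Path a b), C.coeff p δ ≠ 0 → a = j ∧ b = i)
    (hs : δ ∈ C.jacSpan φ ⊔ C.mpow s) : δ ∈ C.jacSpan φ ⊔ C.mpow (s + 1) := by
  have h1 : (1 : k) ∈ constTerms C φ i ⊔ constTerms C φ j := by rw [hI]; trivial
  obtain ⟨α, hα, β, hβ, hαβ⟩ := Submodule.mem_sup.1 h1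
  obtain ⟨y, hy, w, hw, rfl⟩ := Submodule.mem_sup.1 hs
  set ei := C.pathE (Path.nil : Path i i) with hei
  set ej := C.pathE (Path.nil : Path j j) with hej
  have e1 : y + w = ej * (y + w) * ei := by
    apply C.coeff_ext
    intro a b p
    rw [hei, hej, coeff_mul_pathE_nil, coeff_pathE_nil_mul]
    by_cases h : C.coeff p (y + w) = 0
    · simp [h]
    · obtain ⟨rfl, rfl⟩ := hδ p h
      simp
  have e2 : y + w = ej * y * ei + ((ej * w) * (α • ei) + (β • ej) * (w * ei)) := by
    have e3 : (ej * w) * (α • ei) + (β • ej) * (w * ei) = (α + β) • (ej * w * ei) := by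
      simp only [mul_smul_comm, smul_mul_assoc, add_smul, mul_assoc]
    rw [e3, hαβ, one_smul, ← add_mul, ← mul_add, ← e1]
  rw [e2]
  have hjw : ej * w ∈ C.mpow s := by simpa using mul_mem_mpow C (mem_mpow_zero C ej) hw
  have hwi : w * ei ∈ C.mpow s := by simpa using mul_mem_mpow C hw (mem_mpow_zero C ei)
  refine add_mem (Submodule.mem_sup_left
    (jacSpan_mul_right C φ _ (jacSpan_mul_left C φ _ hy))) (add_mem ?_ ?_)
  · exact mul_mem_sup_left C φ hjw (smul_pathE_mem C hα)
  · rw [add_comm s 1]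
    exact mul_mem_sup_right C φ hwi (smul_pathE_mem C hβ)

/-- The induction step: if `m̂^(r-1)` lies in `J_ψ + m̂^s`, then the derivatives of `φ` and `ψ` agree
modulo `J_ψ + m̂^(s+1)`. -/
lemma sub_mem_sup_succ {φ ψ : C.A} {r : ℕ} (hr : 0 < r)
    (hjet : φ - ψ ∈ C.commCl ⊔ C.mpow (r + 1)) (hJ : C.mpow (r - 1) ≤ C.jac φ) {s : ℕ}
    (hs : C.mpow (r - 1) ≤ C.jacSpan ψ ⊔ C.mpow s) {i j : V} (a : i ⟶ j) :
    C.cycDeriv a φ - C.cycDeriv a ψ ∈ C.jacSpan ψ ⊔ C.mpow (s + 1) := by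
  have hδr := cycDeriv_sub_mem C hjet a
  have hδ : ∀ {a' b' : V} (p : Path a' b'), C.coeff p (C.cycDeriv a φ - C.cycDeriv a ψ) ≠ 0 →
      a' = j ∧ b' = i := by
    intro a' b' p hp
    by_contra h
    exact hp (by rw [map_sub, coeff_cycDeriv_ne C a φ p h, coeff_cycDeriv_ne C a ψ p h, sub_zero])
  have hδs : C.cycDeriv a φ - C.cycDeriv a ψ ∈ C.jacSpan ψ ⊔ C.mpow s :=
    hs (C.mpow_antitone (by omega) hδr)
  by_cases hI : constTerms C ψ i ⊔ constTerms C ψ j = ⊤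
  · exact mem_sup_succ_of_constTerms C hI hδ hδs
  obtain ⟨𝔪, hmax, hle⟩ := Ideal.exists_le_maximal _ hI
  let _ : Field (k ⧸ 𝔪) := Ideal.Quotient.field 𝔪
  -- the ideals of `φ` and `ψ` have the same constant terms, as they agree modulo `m̂^r`
  have hφψ : C.jacSpan φ ≤ C.jacSpan ψ ⊔ C.mpow r :=
    jacSpan_le_of_sub_mem C fun a => Submodule.mem_sup_right (cycDeriv_sub_mem C hjet a)
  have hconst (l : V) (hl : constTerms C ψ l ≤ 𝔪) : ∀ y ∈ C.jacSpan φ,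
      C.coeff (Path.nil : Path l l) y ∈ 𝔪 := by
    intro y hy
    obtain ⟨y', hy', w, hw, rfl⟩ := Submodule.mem_sup.1 (hφψ hy)
    rw [map_add, hw (Path.nil : Path l l) (by simpa using hr), add_zero]
    exact hl (Submodule.mem_map_of_mem hy')
  have hi := hconst i (le_sup_left.trans hle)
  have hj := hconst j (le_sup_right.trans hle)
  -- for `r = 1` the Jacobi ideal contains `1`
  have hr2 : 2 ≤ r := by
    by_contra h
    have h0 : (1 : C.A) ∈ C.mpow (r - 1) := by
      rw [show r - 1 = 0 by omega]
      exact mem_mpow_zero C 1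
    obtain ⟨y, hy, w, hw, hyw⟩ := Submodule.mem_sup.1 ((Submodule.mem_iInf _).1 (hJ h0) 1)
    have h1 := congrArg (C.coeff (Path.nil : Path i i)) hyw
    rw [map_add, hw (Path.nil : Path i i) (by simp), add_zero, C.coeff_one,
      if_pos Path.length_nil] at h1
    exact (Ideal.ne_top_iff_one 𝔪).1 hmax.ne_top (h1 ▸ hi y hy)
  have hbad : ∀ n, r ≤ n → ¬ Bad j i n := fun n hn =>
    not_bad C (Ideal.Quotient.mk 𝔪) hJ (by omega)
      (fun y hy => Ideal.Quotient.eq_zero_iff_mem.2 (hj y hy))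
      (fun y hy => Ideal.Quotient.eq_zero_iff_mem.2 (hi y hy))
  refine mem_of_forall_not_bad C hr2 hbad _ le_sup_right ?_ ?_ le_rfl hδ hδr
  · intro u hu g hg
    rw [add_comm s 1]
    exact mul_mem_sup_left C ψ hu (hs hg)
  · intro u hu g hg
    exact mul_mem_sup_right C ψ hu (hs hg)

lemma mpow_le_jacSpan_sup {φ ψ : C.A} {r : ℕ} (hr : 0 < r)
    (hjet : φ - ψ ∈ C.commCl ⊔ C.mpow (r + 1)) (hJ : C.mpow (r - 1) ≤ C.jac φ) (s : ℕ) :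
    C.mpow (r - 1) ≤ C.jacSpan ψ ⊔ C.mpow s := by
  induction s with
  | zero => exact fun x _ => Submodule.mem_sup_right (mem_mpow_zero C x)
  | succ s ih =>
    have h1 : C.jacSpan φ ≤ C.jacSpan ψ ⊔ C.mpow (s + 1) :=
      jacSpan_le_of_sub_mem C fun a => sub_mem_sup_succ C hr hjet hJ ih a
    exact (hJ.trans (iInf_le _ (s + 1))).trans (sup_le h1 le_sup_right)

end Nakayama

end JacJet

/-- Let `Q` be a finite quiver and `Φ, Ψ` two potentials of
`k̂Q` (with representatives `φ, ψ`) whose `r`-jets agree, i.e.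
`Φ − Ψ ∈ π(m̂^{r+1})`, for some `r > 0`.  If `Ĵ(Q,Φ) ⊇ m̂^{r−1}`, then
`Ĵ(Q,Φ) = Ĵ(Q,Ψ)`, and hence the Jacobi algebras are equal. -/
theorem jacobi_ideal_determined_by_jet
    {k V : Type} [CommRing k] [Quiver.{1} V]
    (C : CompletePathAlgebra k V)
    (φ ψ : C.A) (r : ℕ) (hr : 0 < r)
    (hjet : φ - ψ ∈ C.commCl ⊔ C.mpow (r + 1))
    (hJ : C.mpow (r - 1) ≤ C.jac φ) :
    C.jac φ = C.jac ψ := by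
  have h1 (s : ℕ) : C.jacSpan φ ≤ C.jacSpan ψ ⊔ C.mpow s :=
    JacJet.jacSpan_le_of_sub_mem C fun a => JacJet.mpow_le_jacSpan_sup C hr hjet hJ s
      (C.mpow_antitone (Nat.sub_le r 1) (JacJet.cycDeriv_sub_mem C hjet a))
  have h2 (s : ℕ) : C.jacSpan ψ ≤ C.jacSpan φ ⊔ C.mpow s := by
    refine JacJet.jacSpan_le_of_sub_mem C fun a => (hJ.trans (iInf_le _ s)) ?_
    rw [← neg_sub]
    exact neg_mem (C.mpow_antitone (Nat.sub_le r 1) (JacJet.cycDeriv_sub_mem C hjet a))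
  exact le_antisymm
    (le_iInf fun s => (iInf_le _ s).trans (sup_le (h1 s) le_sup_right))
    (le_iInf fun s => (iInf_le _ s).trans (sup_le (h2 s) le_sup_right))
end
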